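/- arXiv:2110.13886 — 3 statements merged into one kernel-verified Lean document; each statement's English description precedes it below -/
import Mathlib

section
/- For every integer e ≥ 5 and each i ∈ {2,3}, there exists a finite metabelian σ-group M of order 3^{6+e}, generated by two elements x and y satisfying w^3 = 1, y^3 = s₅^2, s₂^3 = s₄^2 s₅, s₃^3 = s₅^2, t₃ = s₃ s₅ w^{i-1}, t₄ = s₄, and t₅ = s₅, whose abelianization is isomorphic to (ZMod (3^e)) × (ZMod 3); moreover there exists a finite group G of order 3^{7+e} with the same abelianization, admitting a σ-automorphism, with second derived subgroup nontrivial and third derived subgroup trivial (derived length exactly 3), such that G/G'' is isomorphic to M. -/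
/-- The commutator `[a,b] = a⁻¹ * b⁻¹ * a * b`. -/
def comm' {G : Type*} [Group G] (a b : G) : G := a⁻¹ * b⁻¹ * a * b

/-- `s₂ = [y,x]` and `s_j = [s_(j-1), x]` for `j ≥ 3`. -/
def sgen {G : Type*} [Group G] (x y : G) : ℕ → G
  | 0 => 1
  | 1 => 1
  | 2 => comm' y x
  | (n + 3) => comm' (sgen x y (n + 2)) x

/-- `t_j = [s_(j-1), y]` for `j ≥ 3`. -/
def tgenD {G : Type*} [Group G] (x y : G) (j : ℕ) : G := comm' (sgen x y (j - 1)) y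

/-- `t₂ = [y,x]` and `t_j = [t_(j-1), y]` for `j ≥ 3`. -/
def tgenB {G : Type*} [Group G] (x y : G) : ℕ → G
  | 0 => 1
  | 1 => 1
  | 2 => comm' y x
  | (n + 3) => comm' (tgenB x y (n + 2)) y

/-- A σ-group: a group admitting an automorphism acting as inversion on the
abelianization. -/
def IsSigmaGroup (G : Type*) [Group G] : Prop :=
  ∃ σ : G ≃* G, ∀ g : G, Abelianization.of (σ g) = (Abelianization.of g)⁻¹

/-- A group is metabelian if its commutator subgroup is abelian, i.e. the second
derived subgroup is trivial. -/
def IsMetabelian (G : Type*) [Group G] : Prop := derivedSeries G 2 = ⊥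


/-! ### Cyclic extensions -/

namespace CE

variable {N : Type} [Group N]

/-- The semidirect product of `N` with the integers acting by powers of `β`. -/
abbrev Pre (β : MulAut N) : Type := N ⋊[zpowersHom (MulAut N) β] Multiplicative ℤ

/-- The relator killing `t ^ m = n0`. -/
def rel (β : MulAut N) (n0 : N) (m : ℕ) : Pre β := ⟨n0⁻¹, Multiplicative.ofAdd (m : ℤ)⟩

/-- The cyclic extension `⟨N, t | t n t⁻¹ = β n, t ^ m = n0⟩`. -/
abbrev Ext (β : MulAut N) (n0 : N) (m : ℕ) : Type :=
  Pre β ⧸ Subgroup.normalClosure {rel β n0 m}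

variable (β : MulAut N) (n0 : N) (m : ℕ)

def inc : N →* Ext β n0 m := (QuotientGroup.mk' _).comp SemidirectProduct.inl

def gen : Ext β n0 m :=
  QuotientGroup.mk' _ (SemidirectProduct.inr (Multiplicative.ofAdd (1 : ℤ)))

theorem gen_conj (n : N) : gen β n0 m * inc β n0 m n * (gen β n0 m)⁻¹ = inc β n0 m (β n) := by
  unfold gen inc
  simp only [MonoidHom.comp_apply]
  rw [← map_mul, ← map_inv, ← map_mul]
  congr 1
  rw [← map_inv, ← SemidirectProduct.inl_aut]
  simp

theorem gen_mul (n : N) : gen β n0 m * inc β n0 m n = inc β n0 m (β n) * gen β n0 m := by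
  rw [← gen_conj]; group

theorem inc_mul_gen_zpow (n : N) (k : ℤ) :
    inc β n0 m n * gen β n0 m ^ k = QuotientGroup.mk' _ ⟨n, Multiplicative.ofAdd k⟩ := by
  unfold gen inc
  rw [MonoidHom.comp_apply, ← map_zpow, ← map_mul]
  congr 1
  rw [← map_zpow, ← ofAdd_zsmul, SemidirectProduct.mk_eq_inl_mul_inr]
  simp

theorem exists_rep (g : Ext β n0 m) : ∃ (n : N) (k : ℤ), g = inc β n0 m n * gen β n0 m ^ k := by
  obtain ⟨⟨n, k⟩, rfl⟩ := QuotientGroup.mk'_surjective _ g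
  exact ⟨n, Multiplicative.toAdd k, by rw [inc_mul_gen_zpow]; rfl⟩

theorem gen_pow : gen β n0 m ^ m = inc β n0 m n0 := by
  have h : inc β n0 m n0⁻¹ * gen β n0 m ^ (m : ℤ) = 1 := by
    rw [inc_mul_gen_zpow]
    exact (QuotientGroup.eq_one_iff _).2 (Subgroup.subset_normalClosure rfl)
  rw [map_inv, zpow_natCast, inv_mul_eq_one] at h
  exact h.symm

theorem hom_ext {H : Type*} [Group H] {f g : Ext β n0 m →* H}
    (h1 : ∀ n, f (inc β n0 m n) = g (inc β n0 m n)) (h2 : f (gen β n0 m) = g (gen β n0 m)) :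
    f = g := by
  apply QuotientGroup.monoidHom_ext
  apply SemidirectProduct.hom_ext
  · ext n; exact h1 n
  · apply MonoidHom.ext_mint
    exact h2

variable {β n0 m}

theorem lift_aux {H : Type*} [Group H] (f : N →* H) (h : H)
    (h1 : ∀ n, h * f n * h⁻¹ = f (β n)) (k : ℤ) (n : N) : 
    h ^ k * f n * (h ^ k)⁻¹ = f ((β ^ k) n) := by
  induction k generalizing n with
  | zero => simp
  | succ k ih =>
    rw [zpow_add_one, zpow_add_one, MulAut.mul_apply, ← ih, ← h1]; group
  | pred k ih =>
    rw [zpow_sub_one, zpow_sub_one, MulAut.mul_apply, ← ih]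
    have := h1 (β⁻¹ n)
    rw [MulAut.apply_inv_self] at this
    rw [← this]; group

theorem lift_cond {H : Type*} [Group H] (f : N →* H) (h : H)
    (h1 : ∀ n, h * f n * h⁻¹ = f (β n)) (k : Multiplicative ℤ) :
    f.comp (MulEquiv.toMonoidHom (((zpowersHom (MulAut N)) β) k)) =
      (MulEquiv.toMonoidHom (MulAut.conj (((zpowersHom H) h) k))).comp f := by
  ext n
  have := lift_aux f h h1 (Multiplicative.toAdd k) n
  exact this.symm

/-- The homomorphism before passing to the quotient. -/
def preLift {H : Type*} [Group H] (f : N →* H) (h : H)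
    (h1 : ∀ n, h * f n * h⁻¹ = f (β n)) : Pre β →* H :=
  SemidirectProduct.lift f (zpowersHom H h) (lift_cond f h h1)

theorem preLift_rel {H : Type*} [Group H] (f : N →* H) (h : H)
    (h1 : ∀ n, h * f n * h⁻¹ = f (β n)) (h2 : h ^ m = f n0) :
    Subgroup.normalClosure {rel β n0 m} ≤ (preLift f h h1).ker := by
  apply Subgroup.normalClosure_le_normal
  rintro _ rfl
  show preLift f h h1 (rel β n0 m) = 1
  rw [rel, SemidirectProduct.mk_eq_inl_mul_inr, map_mul, preLift, SemidirectProduct.lift_inl,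
    SemidirectProduct.lift_inr]
  simp [zpowersHom_apply, h2]

/-- The universal property of the cyclic extension. -/
def lift {H : Type*} [Group H] (f : N →* H) (h : H)
    (h1 : ∀ n, h * f n * h⁻¹ = f (β n)) (h2 : h ^ m = f n0) : Ext β n0 m →* H :=
  QuotientGroup.lift _ (preLift f h h1) (fun _ ha => preLift_rel f h h1 h2 ha)

theorem lift_inc {H : Type*} [Group H] (f : N →* H) (h : H)
    (h1 : ∀ n, h * f n * h⁻¹ = f (β n)) (h2 : h ^ m = f n0) (n : N) :
    lift f h h1 h2 (inc β n0 m n) = f n :=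
  SemidirectProduct.lift_inl f (zpowersHom H h) (lift_cond f h h1) n

theorem lift_gen {H : Type*} [Group H] (f : N →* H) (h : H)
    (h1 : ∀ n, h * f n * h⁻¹ = f (β n)) (h2 : h ^ m = f n0) :
    lift f h h1 h2 (gen β n0 m) = h := by
  refine (SemidirectProduct.lift_inr f (zpowersHom H h) (lift_cond f h h1)
    (Multiplicative.ofAdd 1)).trans ?_
  simp [zpowersHom_apply]

/-- degree map -/
def deg (β : MulAut N) (n0 : N) (m : ℕ) : Ext β n0 m →* Multiplicative (ZMod m) :=
  lift 1 (Multiplicative.ofAdd 1) (by intro n; simp) (by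
    rw [← ofAdd_nsmul]; simp)

theorem deg_rep (n : N) (k : ℤ) :
    deg β n0 m (inc β n0 m n * gen β n0 m ^ k) = Multiplicative.ofAdd (k : ZMod m) := by
  rw [map_mul, map_zpow, deg, lift_inc, lift_gen, ← ofAdd_zsmul]; simp

theorem deg_surj : Function.Surjective (deg β n0 m) := by
  intro k
  obtain ⟨l, hl⟩ := ZMod.intCast_surjective (Multiplicative.toAdd k)
  exact ⟨inc β n0 m 1 * gen β n0 m ^ l, by rw [deg_rep, hl]; rfl⟩

theorem deg_ker : (deg β n0 m).ker = (inc β n0 m).range := by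
  ext g
  rw [MonoidHom.mem_ker, MonoidHom.mem_range]
  constructor
  · intro h
    obtain ⟨n, k, rfl⟩ := exists_rep β n0 m g
    rw [deg_rep] at h
    have h' : ((k : ℤ) : ZMod m) = 0 := h
    rw [ZMod.intCast_zmod_eq_zero_iff_dvd] at h'
    obtain ⟨q, rfl⟩ := h'
    refine ⟨n * n0 ^ q, ?_⟩
    rw [map_mul, map_zpow, ← gen_pow, zpow_mul, zpow_natCast]
  · rintro ⟨n, rfl⟩
    rw [deg, lift_inc]; rfl

theorem inc_inj (hm : 0 < m) (h1 : β n0 = n0) (h2 : ∀ n, (β ^ m) n = n0 * n * n0⁻¹) :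
    Function.Injective (inc β n0 m) := by
  rw [injective_iff_map_eq_one]
  intro n hn
  have hn' := (QuotientGroup.eq_one_iff _).1 hn
  have hc : ∀ g : Pre β, g * rel β n0 m = rel β n0 m * g := by
    have h1k : ∀ k : ℤ, (β ^ k) n0⁻¹ = n0⁻¹ := by
      intro k
      have : β ∈ MulAction.stabilizer (MulAut N) n0⁻¹ := by
        rw [MulAction.mem_stabilizer_iff, MulAut.smul_def, map_inv, h1]
      have := Subgroup.zpow_mem _ this k
      rwa [MulAction.mem_stabilizer_iff, MulAut.smul_def] at this
    rintro ⟨a, k⟩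
    unfold rel
    ext
    · simp only [SemidirectProduct.mul_left, zpowersHom_apply, toAdd_ofAdd, zpow_natCast, h2, h1k]
      group
    · simp only [SemidirectProduct.mul_right]
      exact mul_comm k (Multiplicative.ofAdd (m : ℤ))
  have hle : Subgroup.normalClosure {rel β n0 m} ≤ Subgroup.zpowers (rel β n0 m) := by
    have : (Subgroup.zpowers (rel β n0 m)).Normal := by
      constructor
      rintro _ ⟨k, rfl⟩ g
      refine ⟨k, ?_⟩
      have : Commute g (rel β n0 m) := hc g
      have h3 := (this.zpow_right k).eq
      show rel β n0 m ^ k = g * rel β n0 m ^ k * g⁻¹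
      rw [h3]; group
    apply Subgroup.normalClosure_le_normal
    rintro _ rfl
    exact Subgroup.mem_zpowers _
  obtain ⟨k, hk⟩ := hle hn'
  have hk' : rel β n0 m ^ k = SemidirectProduct.inl n := hk
  have hr := congrArg (SemidirectProduct.rightHom) hk'
  rw [map_zpow, SemidirectProduct.rightHom_inl] at hr
  have hr2 : (k : ℤ) * (m : ℤ) = 0 := by
    have := congrArg Multiplicative.toAdd hr
    rw [toAdd_zpow] at this
    simpa [rel] using this
  have hk0 : k = 0 := by
    rcases mul_eq_zero.1 hr2 with h | h
    · exact h
    · omega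
  rw [hk0, zpow_zero] at hk'
  exact (SemidirectProduct.inl_injective (hk'.symm.trans (map_one _).symm))

theorem card_ext (hm : 0 < m) (h1 : β n0 = n0) (h2 : ∀ n, (β ^ m) n = n0 * n * n0⁻¹) :
    Nat.card (Ext β n0 m) = m * Nat.card N := by
  have e1 := Nat.card_congr
    (QuotientGroup.quotientKerEquivOfSurjective (deg β n0 m) deg_surj).toEquiv
  have e2 := Nat.card_congr (MonoidHom.ofInjective (inc_inj hm h1 h2)).toEquiv
  rw [Subgroup.card_eq_card_quotient_mul_card_subgroup (deg β n0 m).ker, e1, deg_ker, ← e2,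
    Nat.card_congr (Multiplicative.toAdd (α := ZMod m)), Nat.card_zmod]

end CE

/-! ### The group `N1` -/

@[ext]
structure N1 : Type where
  a : ZMod 9
  b : ZMod 9
  c : ZMod 9

namespace N1

open scoped commutatorElement

instance : DecidableEq N1 := fun u v =>
  decidable_of_iff (u.a = v.a ∧ u.b = v.b ∧ u.c = v.c) (by rw [N1.ext_iff])

instance : Mul N1 := ⟨fun u v => ⟨u.a + v.a, u.b + v.b, u.c + v.c + 3 * u.b * v.a⟩⟩
instance : One N1 := ⟨⟨0, 0, 0⟩⟩
instance : Inv N1 := ⟨fun u => ⟨-u.a, -u.b, -u.c + 3 * u.b * u.a⟩⟩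

theorem mul_def (u v : N1) : u * v = ⟨u.a + v.a, u.b + v.b, u.c + v.c + 3 * u.b * v.a⟩ := rfl
theorem one_def : (1 : N1) = ⟨0, 0, 0⟩ := rfl
theorem inv_def (u : N1) : u⁻¹ = ⟨-u.a, -u.b, -u.c + 3 * u.b * u.a⟩ := rfl

instance : Group N1 := Group.ofLeftAxioms
  (by intro u v w; simp only [mul_def, N1.mk.injEq]; refine ⟨?_, ?_, ?_⟩ <;> ring)
  (by intro u; ext <;> simp [mul_def, one_def])
  (by intro u; simp only [mul_def, one_def, inv_def, N1.mk.injEq]; refine ⟨?_, ?_, ?_⟩ <;> ring)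

theorem h9 : (9 : ZMod 9) = 0 := by decide

theorem h3 (a : ZMod 9) : 3 * a ^ 3 = 3 * a := by revert a; decide

def equivProd : N1 ≃ ZMod 9 × ZMod 9 × ZMod 9 where
  toFun u := (u.a, u.b, u.c)
  invFun p := ⟨p.1, p.2.1, p.2.2⟩
  left_inv _ := rfl
  right_inv _ := rfl

theorem card_eq : Nat.card N1 = 3 ^ 6 := by
  rw [Nat.card_congr equivProd, Nat.card_prod, Nat.card_prod, Nat.card_zmod]; norm_num

def al0 (u : N1) : N1 := ⟨u.a + 6 * u.b, u.a + 7 * u.b, u.c + 3 * u.a - 3 * u.a ^ 2 + 6 * u.b⟩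
def be0 (u : N1) : N1 := ⟨u.a + 6 * u.b, 7 * u.a + 7 * u.b, u.c + 4 * u.a - 3 * u.a ^ 2⟩
def si0 (u : N1) : N1 := ⟨u.a, 4 * u.a - u.b, -u.a - 3 * u.a ^ 2 - u.c⟩

theorem al0_mul (u v : N1) : al0 (u * v) = al0 u * al0 v := by
  simp only [al0, mul_def, N1.mk.injEq]
  refine ⟨?_, ?_, ?_⟩ <;> grind

theorem be0_mul (u v : N1) : be0 (u * v) = be0 u * be0 v := by
  simp only [be0, mul_def, N1.mk.injEq]
  refine ⟨?_, ?_, ?_⟩ <;> grind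

theorem si0_mul (u v : N1) : si0 (u * v) = si0 u * si0 v := by
  simp only [si0, mul_def, N1.mk.injEq]
  refine ⟨?_, ?_, ?_⟩ <;> grind

theorem al0_3 (u : N1) : al0 (al0 (al0 u)) = u := by
  rcases u with ⟨a, b, c⟩
  simp only [al0, N1.mk.injEq]
  refine ⟨?_, ?_, ?_⟩ <;> grind

theorem be0_3 (u : N1) : be0 (be0 (be0 u)) = u := by
  rcases u with ⟨a, b, c⟩
  simp only [be0, N1.mk.injEq]
  refine ⟨?_, ?_, ?_⟩ <;> grind

def al : MulAut N1 where
  toFun := al0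
  invFun u := al0 (al0 u)
  left_inv := al0_3
  right_inv := al0_3
  map_mul' := al0_mul

def be : MulAut N1 where
  toFun := be0
  invFun u := be0 (be0 u)
  left_inv := be0_3
  right_inv := be0_3
  map_mul' := be0_mul

def si : N1 →* N1 := MonoidHom.mk' si0 si0_mul

theorem al_apply (u : N1) : al u = al0 u := rfl
theorem be_apply (u : N1) : be u = be0 u := rfl
theorem si_apply (u : N1) : si u = si0 u := rfl

def s2 : N1 := ⟨1, 0, 0⟩
def s3 : N1 := ⟨0, 1, 0⟩
def W : N1 := ⟨0, 0, 1⟩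
def y0 : N1 := ⟨0, 6, 0⟩

theorem W_central (u : N1) : W * u = u * W := by
  simp only [W, mul_def, N1.mk.injEq]
  refine ⟨?_, ?_, ?_⟩ <;> ring

theorem al_be (u : N1) : s2⁻¹ * be0 (al0 u) * s2 = al0 (be0 u) := by
  rcases u with ⟨a, b, c⟩
  simp only [al0, be0, s2, mul_def, inv_def, N1.mk.injEq]
  refine ⟨?_, ?_, ?_⟩ <;> grind

theorem si_be (u : N1) : be0 (si0 (be0 u)) = si0 u := by
  rcases u with ⟨a, b, c⟩
  simp only [si0, be0, N1.mk.injEq]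
  refine ⟨?_, ?_, ?_⟩ <;> grind

theorem si_al (u : N1) : al0 (si0 (al0 u)) = si0 u := by
  rcases u with ⟨a, b, c⟩
  simp only [si0, al0, N1.mk.injEq]
  refine ⟨?_, ?_, ?_⟩ <;> grind

theorem conj_y0 (u : N1) : y0 * u * y0⁻¹ = u := by
  rcases u with ⟨a, b, c⟩
  simp only [y0, mul_def, inv_def, N1.mk.injEq]
  refine ⟨?_, ?_, ?_⟩ <;> grind

theorem s2_pow (n : ℕ) : s2 ^ n = ⟨n, 0, 0⟩ := by
  induction n with
  | zero => simp [one_def]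
  | succ n ih => rw [pow_succ, ih]; simp [mul_def, s2]

theorem s3_pow (n : ℕ) : s3 ^ n = ⟨0, n, 0⟩ := by
  induction n with
  | zero => simp [one_def]
  | succ n ih => rw [pow_succ, ih]; simp [mul_def, s3]

theorem W_pow (n : ℕ) : W ^ n = ⟨0, 0, n⟩ := by
  induction n with
  | zero => simp [one_def]
  | succ n ih => rw [pow_succ, ih]; simp [mul_def, W]

theorem decomp (u : N1) : u = s2 ^ u.a.val * s3 ^ u.b.val * W ^ u.c.val := by
  rw [s2_pow, s3_pow, W_pow]
  ext <;> simp [mul_def]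

theorem eq_top (D : Subgroup N1) (h2 : s2 ∈ D) (ha : ∀ u, u⁻¹ * al u ∈ D)
    (hb : ∀ u, u⁻¹ * be u ∈ D) : D = ⊤ := by
  have h3 : s3 ∈ D := by
    have := ha s2
    have e : s2⁻¹ * al s2 = s3 := by rw [al_apply]; decide
    rwa [e] at this
  have hW : W ∈ D := by
    have := D.mul_mem (D.pow_mem h3 2) (hb s2)
    have e : s3 ^ 2 * (s2⁻¹ * be s2) = W := by rw [be_apply, s3_pow]; decide
    rwa [e] at this
  rw [eq_top_iff]
  intro u _
  rw [decomp u]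
  exact D.mul_mem (D.mul_mem (D.pow_mem h2 _) (D.pow_mem h3 _)) (D.pow_mem hW _)

/-- `z = [s2,s3]⁻¹`. -/
def z : N1 := ⟨0, 0, 3⟩

theorem commutator_eq : commutator N1 = Subgroup.zpowers z := by
  apply le_antisymm
  · rw [commutator_def, Subgroup.commutator_le]
    intro u _ v _
    refine ⟨((u.b * v.a - v.b * u.a : ZMod 9).val : ℤ), ?_⟩
    have hz : ∀ n : ℕ, z ^ n = ⟨0, 0, 3 * n⟩ := by
      intro n
      induction n with
      | zero => simp [one_def]
      | succ n ih => rw [pow_succ, ih]; simp [mul_def, z]; ring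
    show z ^ (_ : ℤ) = _
    rw [zpow_natCast, hz, commutatorElement_def]
    simp only [mul_def, inv_def, N1.mk.injEq, ZMod.natCast_val, ZMod.cast_id', id]
    refine ⟨?_, ?_, ?_⟩ <;> grind
  · rw [Subgroup.zpowers_le]
    have : z = ⁅s3, s2⁆ := by rw [commutatorElement_def]; decide
    rw [this]
    exact Subgroup.commutator_mem_commutator (Subgroup.mem_top _) (Subgroup.mem_top _)

theorem z_ne : z ≠ 1 := by decide

theorem card_commutator : Nat.card (commutator N1) = 3 := by
  rw [commutator_eq, Nat.card_zpowers]
  have : Fact (Nat.Prime 3) := ⟨by norm_num⟩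
  exact orderOf_eq_prime (by decide) z_ne

end N1

/-! ### The group `N2 = ⟨y, N1⟩` -/

namespace N2

open N1

abbrev N2 : Type := CE.Ext be y0 3

abbrev ι : N1 →* N2 := CE.inc be y0 3
/-- `t = y⁻¹` -/
abbrev t : N2 := CE.gen be y0 3

theorem be_y0 : be y0 = y0 := by rw [be_apply]; decide

theorem be_pow (n : N1) : (be ^ 3) n = y0 * n * y0⁻¹ := by
  rw [conj_y0]; exact be0_3 n

theorem ι_inj : Function.Injective ι := CE.inc_inj (by norm_num) be_y0 be_pow

theorem card_eq : Nat.card N2 = 3 ^ 7 := by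
  rw [CE.card_ext (by norm_num) be_y0 be_pow, N1.card_eq]; norm_num

theorem t_mul (n : N1) : t * ι n = ι (be0 n) * t := CE.gen_mul be y0 3 n

theorem t_conj (n : N1) : t * ι n * t⁻¹ = ι (be0 n) := CE.gen_conj be y0 3 n

theorem t_pow : t ^ 3 = ι y0 := CE.gen_pow be y0 3

theorem s2t_pow : (ι s2⁻¹ * t) ^ 3 = ι (al0 y0) := by
  have : (ι s2⁻¹ * t) ^ 3 = ι (s2⁻¹ * be0 s2⁻¹ * be0 (be0 s2⁻¹)) * t ^ 3 := by
    calc (ι s2⁻¹ * t) ^ 3 = ι s2⁻¹ * (t * ι s2⁻¹) * (t * ι s2⁻¹) * t := by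
          simp only [pow_succ, pow_zero, one_mul, mul_assoc]
      _ = ι s2⁻¹ * ι (be0 s2⁻¹) * (t * ι (be0 s2⁻¹)) * t * t := by
          rw [t_mul]; simp only [mul_assoc]
      _ = _ := by
          rw [t_mul]; simp only [map_mul, pow_succ, pow_zero, one_mul, mul_assoc]
  rw [this, t_pow, ← map_mul]
  congr 1

def alHom : N2 →* N2 := CE.lift (ι.comp al.toMonoidHom) (ι s2⁻¹ * t)
  (by
    intro n
    show ι s2⁻¹ * t * ι (al0 n) * (ι s2⁻¹ * t)⁻¹ = ι (al0 (be0 n))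
    rw [← al_be, mul_assoc (ι s2⁻¹), t_mul]
    simp only [map_mul, map_inv]
    group)
  s2t_pow

theorem alHom_ι (n : N1) : alHom (ι n) = ι (al0 n) := CE.lift_inc _ _ _ _ n
theorem alHom_t : alHom t = ι s2⁻¹ * t := CE.lift_gen _ _ _ _

theorem alHom_3 (g : N2) : alHom (alHom (alHom g)) = g := by
  have : (alHom.comp alHom).comp alHom = MonoidHom.id N2 := by
    apply CE.hom_ext
    · intro n
      show alHom (alHom (alHom (ι n))) = ι n
      simp only [alHom_ι, al0_3]
    · show alHom (alHom (alHom t)) = t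
      simp only [alHom_t, map_mul alHom, alHom_ι]
      rw [← mul_assoc, ← mul_assoc, ← map_mul, ← map_mul]
      have : al0 (al0 s2⁻¹) * al0 s2⁻¹ * s2⁻¹ = 1 := by decide
      rw [this, map_one, one_mul]
  exact DFunLike.congr_fun this g

def alN : MulAut N2 where
  toFun := alHom
  invFun u := alHom (alHom u)
  left_inv := alHom_3
  right_inv := alHom_3
  map_mul' := map_mul alHom

theorem alN_apply (g : N2) : alN g = alHom g := rfl

theorem alN_pow3 : alN ^ 3 = 1 := by
  ext g; exact alHom_3 g

def siN : N2 →* N2 := CE.lift (ι.comp si) t⁻¹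
  (by
    intro n
    show t⁻¹ * ι (si0 n) * t⁻¹⁻¹ = ι (si0 (be0 n))
    rw [← si_be, ← t_conj]; group)
  (by
    show t⁻¹ ^ 3 = ι (si0 y0)
    rw [inv_pow, t_pow, ← map_inv]
    congr 1)

theorem siN_ι (n : N1) : siN (ι n) = ι (si0 n) := CE.lift_inc _ _ _ _ n
theorem siN_t : siN t = t⁻¹ := CE.lift_gen _ _ _ _

theorem siN_alHom (g : N2) : alHom (siN (alHom g)) = siN g := by
  have : (alHom.comp siN).comp alHom = siN := by
    apply CE.hom_ext
    · intro n
      show alHom (siN (alHom (ι n))) = siN (ι n)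
      simp only [alHom_ι, siN_ι, si_al]
    · show alHom (siN (alHom t)) = siN t
      rw [alHom_t, map_mul, siN_ι, siN_t, map_mul, map_inv, alHom_t, alHom_ι, mul_inv_rev]
      have h : be0 (al0 (si0 s2⁻¹)) = s2⁻¹ := by decide
      have h2 := t_conj (al0 (si0 s2⁻¹))
      rw [h] at h2
      rw [← h2]
      group
  exact DFunLike.congr_fun this g

theorem siN_siN (g : N2) : siN (siN g) = g := by
  have : siN.comp siN = MonoidHom.id N2 := by
    apply CE.hom_ext
    · intro n
      show siN (siN (ι n)) = ι n
      rw [siN_ι, siN_ι]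
      congr 1
      rcases n with ⟨a, b, c⟩
      simp only [si0, N1.mk.injEq]
      refine ⟨?_, ?_, ?_⟩ <;> grind
    · show siN (siN t) = t
      rw [siN_t, map_inv, siN_t, inv_inv]
  exact DFunLike.congr_fun this g

theorem W_comm (g : N2) : ι W * g = g * ι W := by
  obtain ⟨n, k, rfl⟩ := CE.exists_rep be y0 3 g
  have h1 : Commute (ι W) (ι n) := by
    show _ * _ = _ * _
    rw [← map_mul, ← map_mul, W_central]
  have h2 : Commute (ι W) t := by
    show _ * _ = _ * _
    rw [t_mul]
    congr 2
  exact h1.mul_right (h2.zpow_right k)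

end N2

/-! ### The group `G3` -/

namespace G3

open N1 N2

/-- `ε` is the exponent with `x⁻¹ ^ 3 ^ e = W ^ ε`. -/
abbrev G (ε : ℤ) (e : ℕ) : Type := CE.Ext alN (ι (W ^ ε)) (3 ^ e)

variable (ε : ℤ) (e : ℕ)

abbrev κ : N2 →* G ε e := CE.inc alN (ι (W ^ ε)) (3 ^ e)
/-- `r = x⁻¹` -/
abbrev r : G ε e := CE.gen alN (ι (W ^ ε)) (3 ^ e)

theorem al_W : al W = W := by rw [al_apply]; decide
theorem be_W : be W = W := by rw [be_apply]; decide
theorem si_W : si W = W⁻¹ := by rw [si_apply]; decide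

theorem alN_W : alN (ι (W ^ ε)) = ι (W ^ ε) := by
  rw [alN_apply, alHom_ι]
  congr 1
  rw [← al_apply, map_zpow, al_W]

theorem alN_pow (he : 1 ≤ e) (n : N2) :
    (alN ^ 3 ^ e) n = ι (W ^ ε) * n * (ι (W ^ ε))⁻¹ := by
  obtain ⟨k, rfl⟩ : ∃ k, e = k + 1 := ⟨e - 1, by omega⟩
  rw [pow_succ', pow_mul, alN_pow3, one_pow, map_zpow]
  have h : Commute (ι W) n := W_comm n
  rw [(h.zpow_left ε).eq]
  simp

theorem κ_inj (he : 1 ≤ e) : Function.Injective (κ ε e) :=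
  CE.inc_inj (by positivity) (alN_W ε) (alN_pow ε e he)

theorem card_eq (he : 1 ≤ e) : Nat.card (G ε e) = 3 ^ (7 + e) := by
  rw [CE.card_ext (by positivity) (alN_W ε) (alN_pow ε e he), N2.card_eq, ← pow_add, add_comm]

theorem r_conj (n : N2) : r ε e * κ ε e n * (r ε e)⁻¹ = κ ε e (alHom n) :=
  CE.gen_conj alN (ι (W ^ ε)) (3 ^ e) n

theorem r_pow : r ε e ^ 3 ^ e = κ ε e (ι (W ^ ε)) := CE.gen_pow alN (ι (W ^ ε)) (3 ^ e)

def J : N1 →* G ε e := (κ ε e).comp ι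

theorem J_inj (he : 1 ≤ e) : Function.Injective (J ε e) := (κ_inj ε e he).comp ι_inj

def x : G ε e := (r ε e)⁻¹
def y : G ε e := κ ε e t⁻¹

theorem x_conj (n : N1) : (x ε e)⁻¹ * J ε e n * x ε e = J ε e (al n) := by
  have := r_conj ε e (ι n)
  rw [alHom_ι] at this
  rw [x, inv_inv]; exact this

theorem y_conj (n : N1) : (y ε e)⁻¹ * J ε e n * y ε e = J ε e (be n) := by
  show (κ ε e t⁻¹)⁻¹ * κ ε e (ι n) * κ ε e t⁻¹ = κ ε e (ι (be0 n))
  rw [← map_inv, ← map_mul, ← map_mul, inv_inv, t_conj]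

theorem comm_x (n : N1) : comm' (J ε e n) (x ε e) = J ε e (n⁻¹ * al n) := by
  rw [comm', mul_assoc, mul_assoc, ← mul_assoc (x ε e)⁻¹, x_conj, map_mul, map_inv]

theorem comm_y (n : N1) : comm' (J ε e n) (y ε e) = J ε e (n⁻¹ * be n) := by
  rw [comm', mul_assoc, mul_assoc, ← mul_assoc (y ε e)⁻¹, y_conj, map_mul, map_inv]

theorem sgen2 : sgen (x ε e) (y ε e) 2 = J ε e s2 := by
  have h := r_conj ε e t⁻¹
  rw [map_inv alHom, alHom_t] at h
  show (y ε e)⁻¹ * (x ε e)⁻¹ * y ε e * x ε e = _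
  have h' : (x ε e)⁻¹ * y ε e * x ε e = κ ε e (ι s2⁻¹ * t)⁻¹ := by
    rw [x, inv_inv, y]; exact h
  calc (y ε e)⁻¹ * (x ε e)⁻¹ * y ε e * x ε e
      = (y ε e)⁻¹ * ((x ε e)⁻¹ * y ε e * x ε e) := by simp only [mul_assoc]
    _ = _ := by
      rw [h', y, ← map_inv, ← map_mul, J, MonoidHom.comp_apply]
      congr 1

theorem sgen3 : sgen (x ε e) (y ε e) 3 = J ε e s3 := by
  show comm' (sgen (x ε e) (y ε e) 2) _ = _
  rw [sgen2, comm_x, al_apply]; congr 1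

theorem sgen4 : sgen (x ε e) (y ε e) 4 = J ε e ⟨6, 6, 6⟩ := by
  show comm' (sgen (x ε e) (y ε e) 3) _ = _
  rw [sgen3, comm_x, al_apply]; congr 1

theorem sgen5 : sgen (x ε e) (y ε e) 5 = J ε e ⟨0, 6, 0⟩ := by
  show comm' (sgen (x ε e) (y ε e) 4) _ = _
  rw [sgen4, comm_x, al_apply]; congr 1

theorem x_pow : x ε e ^ 3 ^ e = J ε e (W ^ (-ε)) := by
  rw [x, inv_pow, r_pow, zpow_neg, map_inv]; rfl

theorem y_pow : y ε e ^ 3 = J ε e ⟨0, 3, 0⟩ := by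
  rw [y, ← map_pow, inv_pow, t_pow, ← map_inv]; rfl

theorem rep (g : G ε e) : ∃ (n : N1) (j k : ℤ), g = J ε e n * y ε e ^ j * x ε e ^ k := by
  obtain ⟨m, k, rfl⟩ := CE.exists_rep _ _ _ g
  obtain ⟨n, j, rfl⟩ := CE.exists_rep _ _ _ m
  refine ⟨n, -j, -k, ?_⟩
  rw [x, y, J, MonoidHom.comp_apply, map_mul, ← map_zpow, inv_zpow', inv_zpow', neg_neg, neg_neg]

theorem closure_eq : Subgroup.closure {x ε e, y ε e} = ⊤ := by
  set C := Subgroup.closure {x ε e, y ε e} with hC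
  have hx : x ε e ∈ C := Subgroup.subset_closure (by simp)
  have hy : y ε e ∈ C := Subgroup.subset_closure (by simp)
  have hJ : C.comap (J ε e) = ⊤ := by
    have h2 : s2 ∈ C.comap (J ε e) := by
      rw [Subgroup.mem_comap, ← sgen2]
      exact C.mul_mem (C.mul_mem (C.mul_mem (C.inv_mem hy) (C.inv_mem hx)) hy) hx
    have h3 : s3 ∈ C.comap (J ε e) := by
      rw [Subgroup.mem_comap] at h2
      rw [Subgroup.mem_comap, ← sgen3]
      show comm' (sgen (x ε e) (y ε e) 2) _ ∈ C
      rw [sgen2]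
      exact C.mul_mem (C.mul_mem (C.mul_mem (C.inv_mem h2) (C.inv_mem hx)) h2) hx
    have hW : W ∈ C.comap (J ε e) := by
      have e1 : s3 ^ 2 * (s2⁻¹ * be s2) = W := by rw [be_apply, s3_pow]; decide
      suffices h : s3 ^ 2 * (s2⁻¹ * be s2) ∈ C.comap (J ε e) by
        have e2 := congrArg (fun u => u ∈ C.comap (J ε e)) e1
        exact e2 ▸ h
      refine Subgroup.mul_mem _ (Subgroup.pow_mem _ h3 _) ?_
      rw [Subgroup.mem_comap] at h2 ⊢
      rw [← comm_y]
      exact C.mul_mem (C.mul_mem (C.mul_mem (C.inv_mem h2) (C.inv_mem hy)) h2) hy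
    rw [eq_top_iff]
    intro u _
    rw [decomp u]
    exact Subgroup.mul_mem _ (Subgroup.mul_mem _ (Subgroup.pow_mem _ h2 _)
      (Subgroup.pow_mem _ h3 _)) (Subgroup.pow_mem _ hW _)
  rw [eq_top_iff]
  intro g _
  obtain ⟨n, j, k, rfl⟩ := rep ε e g
  have hn : n ∈ C.comap (J ε e) := by rw [hJ]; trivial
  exact C.mul_mem (C.mul_mem hn (C.zpow_mem hy _)) (C.zpow_mem hx _)

theorem comm'_mem {H : Type*} [Group H] (a b : H) : comm' a b ∈ commutator H := by
  have := Subgroup.commutator_mem_commutator (H₁ := (⊤ : Subgroup H)) (H₂ := ⊤)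
    (Subgroup.mem_top a⁻¹) (Subgroup.mem_top b⁻¹)
  rw [commutatorElement_def, inv_inv, inv_inv] at this
  exact this

theorem J_mem (n : N1) : J ε e n ∈ commutator (G ε e) := by
  have : (commutator (G ε e)).comap (J ε e) = ⊤ := by
    apply N1.eq_top
    · rw [Subgroup.mem_comap, ← sgen2]; exact comm'_mem _ _
    · intro u; rw [Subgroup.mem_comap, ← comm_x]; exact comm'_mem _ _
    · intro u; rw [Subgroup.mem_comap, ← comm_y]; exact comm'_mem _ _
  have hn : n ∈ (commutator (G ε e)).comap (J ε e) := by rw [this]; trivial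
  exact hn

/-- The exponent of `y`. -/
def degY : G ε e →* Multiplicative (ZMod 3) := CE.lift (CE.deg be y0 3) 1
  (by
    intro n
    have : (CE.deg be y0 3).comp alHom = CE.deg be y0 3 := by
      apply CE.hom_ext
      · intro n
        show CE.deg be y0 3 (alHom (ι n)) = CE.deg be y0 3 (ι n)
        rw [alHom_ι, CE.deg, CE.lift_inc, CE.lift_inc]; rfl
      · show CE.deg be y0 3 (alHom t) = CE.deg be y0 3 t
        rw [alHom_t, map_mul, CE.deg, CE.lift_inc]; simp
    have h := DFunLike.congr_fun this n
    rw [one_mul, inv_one, mul_one]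
    exact h.symm)
  (by rw [one_pow, CE.deg, CE.lift_inc]; rfl)

def ab : G ε e →* Multiplicative (ZMod (3 ^ e) × ZMod 3) :=
  (MulEquiv.prodMultiplicative (ZMod (3 ^ e)) (ZMod 3)).symm.toMonoidHom.comp
    ((CE.deg alN (ι (W ^ ε)) (3 ^ e)).prod (degY ε e))

theorem ab_rep (n : N1) (j k : ℤ) :
    ab ε e (κ ε e (ι n * t ^ j) * r ε e ^ k) = Multiplicative.ofAdd ((k : ZMod (3 ^ e)), (j : ZMod 3)) := by
  have h1 : CE.deg alN (ι (W ^ ε)) (3 ^ e) (κ ε e (ι n * t ^ j) * r ε e ^ k) =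
    Multiplicative.ofAdd (k : ZMod (3 ^ e)) := CE.deg_rep _ _
  have h2 : degY ε e (κ ε e (ι n * t ^ j) * r ε e ^ k) = Multiplicative.ofAdd (j : ZMod 3) := by
    rw [map_mul (degY ε e), map_zpow (degY ε e), degY, CE.lift_inc, CE.lift_gen, one_zpow, mul_one]
    exact CE.deg_rep _ _
  rw [ab, MonoidHom.comp_apply, MonoidHom.prod_apply, h1, h2]
  rfl

theorem ab_surj : Function.Surjective (ab ε e) := by
  intro p
  obtain ⟨k, hk⟩ := ZMod.intCast_surjective (Multiplicative.toAdd p).1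
  obtain ⟨j, hj⟩ := ZMod.intCast_surjective (Multiplicative.toAdd p).2
  refine ⟨κ ε e (ι 1 * t ^ j) * r ε e ^ k, ?_⟩
  rw [ab_rep, hk, hj]; rfl

theorem ab_ker : (ab ε e).ker = (J ε e).range := by
  apply le_antisymm
  · intro g hg
    rw [MonoidHom.mem_ker] at hg
    obtain ⟨m, k, rfl⟩ := CE.exists_rep _ _ _ g
    obtain ⟨n, j, rfl⟩ := CE.exists_rep _ _ _ m
    have hg' := hg
    rw [ab_rep] at hg'
    have hk : ((k : ℤ) : ZMod (3 ^ e)) = 0 := congrArg (fun p => (Multiplicative.toAdd p).1) hg'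
    have hj : ((j : ℤ) : ZMod 3) = 0 := congrArg (fun p => (Multiplicative.toAdd p).2) hg'
    rw [ZMod.intCast_zmod_eq_zero_iff_dvd] at hk
    have hj' := (ZMod.intCast_zmod_eq_zero_iff_dvd j 3).1 hj
    obtain ⟨q, rfl⟩ := hk
    obtain ⟨p, rfl⟩ := hj'
    refine ⟨n * y0 ^ p * (W ^ ε) ^ q, ?_⟩
    have h1 : t ^ (((3 : ℕ) : ℤ) * p) = ι (y0 ^ p) := by
      rw [zpow_mul, zpow_natCast, t_pow, map_zpow]
    have h2 : r ε e ^ (((3 ^ e : ℕ) : ℤ) * q) = κ ε e (ι ((W ^ ε) ^ q)) := by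
      rw [zpow_mul, zpow_natCast, r_pow]
      exact (map_zpow (J ε e) (W ^ ε) q).symm
    rw [h1, h2, map_mul (J ε e), map_mul (J ε e), map_mul (κ ε e)]
    rfl
  · rintro _ ⟨n, rfl⟩
    rw [MonoidHom.mem_ker]
    have := ab_rep ε e n 0 0
    rw [zpow_zero, zpow_zero, mul_one, mul_one] at this
    refine Eq.trans this ?_
    simp

theorem commutator_eq : commutator (G ε e) = (J ε e).range := by
  apply le_antisymm
  · rw [← ab_ker]; exact Abelianization.commutator_subset_ker _
  · rintro _ ⟨n, rfl⟩; exact J_mem ε e n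

theorem derived2 : derivedSeries (G ε e) 2 = (commutator N1).map (J ε e) := by
  rw [derivedSeries_succ, derivedSeries_one, commutator_eq, MonoidHom.range_eq_map,
    ← Subgroup.map_commutator]
  rfl

theorem derived3 : derivedSeries (G ε e) 3 = ⊥ := by
  rw [derivedSeries_succ, derived2, ← Subgroup.map_commutator, N1.commutator_eq]
  have : ⁅Subgroup.zpowers z, Subgroup.zpowers z⁆ = ⊥ := by
    rw [Subgroup.commutator_eq_bot_iff_le_centralizer]
    rintro _ ⟨a, rfl⟩
    rw [Subgroup.mem_centralizer_iff]
    rintro _ ⟨b, rfl⟩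
    exact zpow_mul_comm z b a
  rw [this, Subgroup.map_bot]

theorem card_derived2 (he : 1 ≤ e) : Nat.card (derivedSeries (G ε e) 2) = 3 := by
  rw [derived2]
  exact (Subgroup.card_map_of_injective (J_inj ε e he)).trans N1.card_commutator

def sg : G ε e →* G ε e := CE.lift ((κ ε e).comp siN) (r ε e)⁻¹
  (by
    intro n
    show (r ε e)⁻¹ * κ ε e (siN n) * (r ε e)⁻¹⁻¹ = κ ε e (siN (alHom n))
    rw [← siN_alHom n, ← r_conj]
    group)
  (by
    show (r ε e)⁻¹ ^ 3 ^ e = κ ε e (siN (ι (W ^ ε)))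
    rw [inv_pow, r_pow, siN_ι, ← si_apply, map_zpow si, si_W, inv_zpow, map_inv ι, map_inv])

theorem sg_κ (n : N2) : sg ε e (κ ε e n) = κ ε e (siN n) := CE.lift_inc _ _ _ _ n
theorem sg_r : sg ε e (r ε e) = (r ε e)⁻¹ := CE.lift_gen _ _ _ _

theorem sg_sg (g : G ε e) : sg ε e (sg ε e g) = g := by
  have : (sg ε e).comp (sg ε e) = MonoidHom.id _ := by
    apply CE.hom_ext
    · intro n
      show sg ε e (sg ε e (κ ε e n)) = κ ε e n
      rw [sg_κ, sg_κ, siN_siN]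
    · show sg ε e (sg ε e (r ε e)) = r ε e
      rw [sg_r, map_inv, sg_r, inv_inv]
  exact DFunLike.congr_fun this g

def sigma : G ε e ≃* G ε e where
  toFun := sg ε e
  invFun := sg ε e
  left_inv := sg_sg ε e
  right_inv := sg_sg ε e
  map_mul' := map_mul (sg ε e)

theorem sg_inv {A : Type} [CommGroup A] (f : G ε e →* A) (hJ : ∀ n, f (J ε e n) = 1)
    (g : G ε e) : f (sg ε e g) = (f g)⁻¹ := by
  have hN : f.comp ((κ ε e).comp siN) = (f.comp (κ ε e))⁻¹ := by
    apply CE.hom_ext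
    · intro n
      rw [MonoidHom.inv_apply]
      show f (κ ε e (siN (ι n))) = (f (J ε e n))⁻¹
      rw [siN_ι, hJ n, inv_one]
      exact hJ (si0 n)
    · rw [MonoidHom.inv_apply]
      show f (κ ε e (siN t)) = (f (κ ε e t))⁻¹
      rw [siN_t, map_inv (κ ε e), map_inv f]
  have hG : f.comp (sg ε e) = f⁻¹ := by
    apply CE.hom_ext
    · intro n
      rw [MonoidHom.inv_apply]
      show f (sg ε e (κ ε e n)) = (f (κ ε e n))⁻¹
      rw [sg_κ]
      exact DFunLike.congr_fun hN n
    · rw [MonoidHom.inv_apply]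
      show f (sg ε e (r ε e)) = (f (r ε e))⁻¹
      rw [sg_r, map_inv f]
  exact DFunLike.congr_fun hG g

theorem sigma_ab : IsSigmaGroup (G ε e) := by
  refine ⟨sigma ε e, fun g => sg_inv ε e Abelianization.of ?_ g⟩
  intro n
  rw [← MonoidHom.mem_ker, Abelianization.ker_of]
  exact J_mem ε e n

end G3

/-! ### Generic lemmas on quotients -/

theorem abelianization_iso {H A : Type*} [Group H] [CommGroup A] (f : H →* A)
    (hs : Function.Surjective f) (hk : f.ker ≤ commutator H) :
    Nonempty (Abelianization H ≃* A) := by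
  have hk' : commutator H = f.ker := le_antisymm (Abelianization.commutator_subset_ker f) hk
  exact ⟨(QuotientGroup.quotientMulEquivOfEq hk').trans
    (QuotientGroup.quotientKerEquivOfSurjective f hs)⟩

theorem derived_le {H : Type*} [Group H] : derivedSeries H 2 ≤ commutator H := by
  rw [← derivedSeries_one]; exact derivedSeries_antitone H (by norm_num)

theorem quot_abelianization_iso {H A : Type*} [Group H] [CommGroup A] (f : H →* A)
    (hs : Function.Surjective f) (hk : f.ker ≤ commutator H) :
    Nonempty (Abelianization (H ⧸ derivedSeries H 2) ≃* A) := by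
  have hle : derivedSeries H 2 ≤ f.ker :=
    derived_le.trans (Abelianization.commutator_subset_ker f)
  refine abelianization_iso (QuotientGroup.lift (derivedSeries H 2) f (fun g hg => hle hg)) ?_ ?_
  · intro a
    obtain ⟨g, rfl⟩ := hs a
    exact ⟨QuotientGroup.mk g, rfl⟩
  · intro q hq
    obtain ⟨g, rfl⟩ := QuotientGroup.mk'_surjective _ q
    have hg : g ∈ commutator H := hk hq
    have : (commutator H).map (QuotientGroup.mk' (derivedSeries H 2)) ≤
        commutator (H ⧸ derivedSeries H 2) := by
      rw [commutator_def, commutator_def, Subgroup.map_commutator]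
      exact Subgroup.commutator_mono le_top le_top
    exact this ⟨g, hg, rfl⟩

theorem quot_metabelian {H : Type*} [Group H] : IsMetabelian (H ⧸ derivedSeries H 2) := by
  have h := map_derivedSeries_eq (QuotientGroup.mk'_surjective (derivedSeries H 2)) 2
  unfold IsMetabelian
  rw [← h, Subgroup.map_eq_bot_iff, QuotientGroup.ker_mk']

theorem quot_sigma {H : Type*} [Group H] (h : IsSigmaGroup H) :
    IsSigmaGroup (H ⧸ derivedSeries H 2) := by
  obtain ⟨σ, hσ⟩ := h
  have hm : (derivedSeries H 2).map (σ : H →* H) = derivedSeries H 2 :=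
    map_derivedSeries_eq (f := (σ : H →* H)) σ.surjective 2
  refine ⟨QuotientGroup.congr _ _ σ hm, ?_⟩
  intro q
  obtain ⟨g, rfl⟩ := QuotientGroup.mk'_surjective _ q
  have h1 := congrArg (Abelianization.map (QuotientGroup.mk' (derivedSeries H 2))) (hσ g)
  rw [map_inv, Abelianization.map_of, Abelianization.map_of] at h1
  exact h1

theorem map_comm' {H K : Type*} [Group H] [Group K] (f : H →* K) (a b : H) :
    f (comm' a b) = comm' (f a) (f b) := by
  simp [comm']

theorem map_sgen {H K : Type*} [Group H] [Group K] (f : H →* K) (a b : H) (n : ℕ) :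
    f (sgen a b (n + 2)) = sgen (f a) (f b) (n + 2) := by
  induction n with
  | zero => exact map_comm' f b a
  | succ n ih =>
    show f (comm' (sgen a b (n + 2)) a) = comm' (sgen (f a) (f b) (n + 2)) (f a)
    rw [map_comm', ih]

namespace G3

open N1 N2

theorem core {H : Type} [Group H] (J : N1 →* H) (x y : H) (ε : ℤ) (e d : ℕ)
    (hd : (⟨0, 0, 1⟩ : N1)⁻¹ * (W ^ (-ε)) ^ d ∈ commutator N1)
    (card_eq : Nat.card H = 3 ^ (7 + e))
    (hsig : IsSigmaGroup H)
    (ab : H →* Multiplicative (ZMod (3 ^ e) × ZMod 3))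
    (ab_surj : Function.Surjective ab)
    (hker : ab.ker ≤ commutator H)
    (derived2 : derivedSeries H 2 = (commutator N1).map J)
    (derived3 : derivedSeries H 3 = ⊥)
    (card_derived2 : Nat.card (derivedSeries H 2) = 3)
    (closure_eq : Subgroup.closure {x, y} = ⊤)
    (sgen2 : sgen x y 2 = J s2)
    (sgen3 : sgen x y 3 = J s3)
    (sgen4 : sgen x y 4 = J ⟨6, 6, 6⟩)
    (sgen5 : sgen x y 5 = J ⟨0, 6, 0⟩)
    (x_pow : x ^ 3 ^ e = J (W ^ (-ε)))
    (y_pow : y ^ 3 = J ⟨0, 3, 0⟩)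
    (comm_y : ∀ n, comm' (J n) y = J (n⁻¹ * be n)) :
    ∃ (M : Type) (_ : Group M) (_ : Finite M) (x y : M),
      Subgroup.closure {x, y} = ⊤ ∧
      Nat.card M = 3 ^ (6 + e) ∧
      IsMetabelian M ∧
      IsSigmaGroup M ∧
      (x ^ 3 ^ e) ^ 3 = 1 ∧
      y ^ 3 = sgen x y 5 ^ 2 ∧
      sgen x y 2 ^ 3 = sgen x y 4 ^ 2 * sgen x y 5 ∧
      sgen x y 3 ^ 3 = sgen x y 5 ^ 2 ∧
      tgenD x y 3 = sgen x y 3 * sgen x y 5 * (x ^ 3 ^ e) ^ d ∧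
      tgenD x y 4 = sgen x y 4 ∧
      tgenD x y 5 = sgen x y 5 ∧
      Nonempty (Abelianization M ≃* Multiplicative (ZMod (3 ^ e) × ZMod 3)) ∧
      ∃ (G : Type) (_ : Group G) (_ : Finite G),
        Nat.card G = 3 ^ (7 + e) ∧
        Nonempty (Abelianization G ≃* Multiplicative (ZMod (3 ^ e) × ZMod 3)) ∧
        IsSigmaGroup G ∧
        derivedSeries G 2 ≠ ⊥ ∧
        derivedSeries G 3 = ⊥ ∧
        ∃ φ : G →* M, Function.Surjective φ ∧ φ.ker = derivedSeries G 2 := by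
  have hfin : Finite (H) := Nat.finite_of_card_ne_zero (by rw [card_eq]; positivity)
  let q : H →* H ⧸ derivedSeries (H) 2 := QuotientGroup.mk' _
  have hq : Function.Surjective q := QuotientGroup.mk'_surjective _
  have hqJ : ∀ u v : N1, u⁻¹ * v ∈ commutator N1 → q (J u) = q (J v) := by
    intro u v h
    refine QuotientGroup.eq.2 ?_
    rw [derived2, ← map_inv (J), ← map_mul (J)]
    exact ⟨_, h, rfl⟩
  have hz : ∀ u v : N1, u⁻¹ * v ∈ Subgroup.zpowers N1.z → q (J u) = q (J v) := by
    intro u v h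
    rw [← N1.commutator_eq] at h
    exact hqJ u v h
  have e2 : sgen (q (x)) (q (y)) 2 = q (J s2) := by rw [← sgen2, map_sgen]
  have e3 : sgen (q (x)) (q (y)) 3 = q (J s3) := by rw [← sgen3, map_sgen]
  have e4 : sgen (q (x)) (q (y)) 4 = q (J ⟨6, 6, 6⟩) := by rw [← sgen4, map_sgen]
  have e5 : sgen (q (x)) (q (y)) 5 = q (J ⟨0, 6, 0⟩) := by rw [← sgen5, map_sgen]
  have ex : q (x) ^ 3 ^ e = q (J (W ^ (-ε))) := by rw [← x_pow, map_pow]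
  have ey : q (y) ^ 3 = q (J ⟨0, 3, 0⟩) := by rw [← y_pow, map_pow]
  have et : ∀ n, comm' (q (J n)) (q (y)) = q (J (n⁻¹ * be0 n)) := by
    intro n
    rw [← map_comm', comm_y]; rfl
  refine ⟨H ⧸ derivedSeries (H) 2, inferInstance, inferInstance, q (x), q (y),
    ?_, ?_, quot_metabelian, quot_sigma hsig, ?_, ?_, ?_, ?_, ?_, ?_, ?_,
    quot_abelianization_iso _ (ab_surj) hker, H, inferInstance, hfin, card_eq,
    abelianization_iso _ (ab_surj) hker, hsig, ?_, derived3, q, hq,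
    QuotientGroup.ker_mk' _⟩
  · have h := congrArg (Subgroup.map q) (closure_eq)
    rw [MonoidHom.map_closure, Set.image_pair, Subgroup.map_top_of_surjective q hq] at h
    exact h
  · have h := Subgroup.card_eq_card_quotient_mul_card_subgroup (derivedSeries (H) 2)
    rw [card_eq, card_derived2] at h
    have h7 : 3 ^ (7 + e) = 3 ^ (6 + e) * 3 := by rw [← pow_succ]; congr 1; omega
    rw [h7] at h
    exact (Nat.eq_of_mul_eq_mul_right (by norm_num) h).symm
  · rw [ex, ← map_pow q, ← map_pow (J), ← map_one q, ← map_one (J)]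
    apply hz
    refine ⟨ε, ?_⟩
    have hWz : N1.z = W ^ 3 := by decide
    show N1.z ^ ε = (((W ^ (-ε)) ^ 3)⁻¹ * 1)
    rw [hWz, mul_one, zpow_neg, inv_pow, inv_inv, ← zpow_natCast, ← zpow_natCast, zpow_comm]
  · rw [ey, e5, ← map_pow q, ← map_pow (J)]
    apply hz
    first | exact ⟨0, by decide⟩ | exact ⟨1, by decide⟩ | exact ⟨2, by decide⟩
  · rw [e2, e4, e5, ← map_pow q, ← map_pow (J), ← map_pow q, ← map_pow (J), ← map_mul q,
      ← map_mul (J)]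
    apply hz
    first | exact ⟨0, by decide⟩ | exact ⟨1, by decide⟩ | exact ⟨2, by decide⟩
  · rw [e3, e5, ← map_pow q, ← map_pow (J), ← map_pow q, ← map_pow (J)]
    apply hz
    first | exact ⟨0, by decide⟩ | exact ⟨1, by decide⟩ | exact ⟨2, by decide⟩
  · show comm' (sgen (q (x)) (q (y)) 2) _ = _
    rw [e2, e3, e5, ex, et, ← map_pow q, ← map_pow (J), ← hqJ _ _ hd, ← map_mul q,
      ← map_mul (J), ← map_mul q, ← map_mul (J)]
    apply hz
    first | exact ⟨0, by decide⟩ | exact ⟨1, by decide⟩ | exact ⟨2, by decide⟩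
  · show comm' (sgen (q (x)) (q (y)) 3) _ = _
    rw [e3, e4, et]
    apply hz
    first | exact ⟨0, by decide⟩ | exact ⟨1, by decide⟩ | exact ⟨2, by decide⟩
  · show comm' (sgen (q (x)) (q (y)) 4) _ = _
    rw [e4, e5, et]
    apply hz
    first | exact ⟨0, by decide⟩ | exact ⟨1, by decide⟩ | exact ⟨2, by decide⟩
  · intro h
    have := card_derived2
    rw [h, Subgroup.card_bot] at this
    omega

end G3

theorem stmt10 (e i : ℕ) (he : 5 ≤ e) (hi : i = 2 ∨ i = 3) :
    ∃ (M : Type) (_ : Group M) (_ : Finite M) (x y : M),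
      Subgroup.closure {x, y} = ⊤ ∧
      Nat.card M = 3 ^ (6 + e) ∧
      IsMetabelian M ∧
      IsSigmaGroup M ∧
      (x ^ 3 ^ e) ^ 3 = 1 ∧
      y ^ 3 = sgen x y 5 ^ 2 ∧
      sgen x y 2 ^ 3 = sgen x y 4 ^ 2 * sgen x y 5 ∧
      sgen x y 3 ^ 3 = sgen x y 5 ^ 2 ∧
      tgenD x y 3 = sgen x y 3 * sgen x y 5 * (x ^ 3 ^ e) ^ (i - 1) ∧
      tgenD x y 4 = sgen x y 4 ∧
      tgenD x y 5 = sgen x y 5 ∧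
      Nonempty (Abelianization M ≃* Multiplicative (ZMod (3 ^ e) × ZMod 3)) ∧
      ∃ (G : Type) (_ : Group G) (_ : Finite G),
        Nat.card G = 3 ^ (7 + e) ∧
        Nonempty (Abelianization G ≃* Multiplicative (ZMod (3 ^ e) × ZMod 3)) ∧
        IsSigmaGroup G ∧
        derivedSeries G 2 ≠ ⊥ ∧
        derivedSeries G 3 = ⊥ ∧
        ∃ φ : G →* M, Function.Surjective φ ∧ φ.ker = derivedSeries G 2 := by
  rcases hi with rfl | rfl
  · refine G3.core (G3.J (-1) e) (G3.x (-1) e) (G3.y (-1) e) (-1) e 1 ?_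
      (G3.card_eq _ e (by omega)) (G3.sigma_ab _ e) (G3.ab _ e) (G3.ab_surj _ e)
      (by rw [G3.ab_ker, G3.commutator_eq]) (G3.derived2 _ e) (G3.derived3 _ e)
      (G3.card_derived2 _ e (by omega)) (G3.closure_eq _ e) (G3.sgen2 _ e) (G3.sgen3 _ e)
      (G3.sgen4 _ e) (G3.sgen5 _ e) (G3.x_pow _ e) (G3.y_pow _ e) (G3.comm_y _ e)
    rw [N1.commutator_eq]
    first | exact ⟨0, by decide⟩ | exact ⟨1, by decide⟩ | exact ⟨-1, by decide⟩
  · refine G3.core (G3.J (1) e) (G3.x (1) e) (G3.y (1) e) (1) e 2 ?_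
      (G3.card_eq _ e (by omega)) (G3.sigma_ab _ e) (G3.ab _ e) (G3.ab_surj _ e)
      (by rw [G3.ab_ker, G3.commutator_eq]) (G3.derived2 _ e) (G3.derived3 _ e)
      (G3.card_derived2 _ e (by omega)) (G3.closure_eq _ e) (G3.sgen2 _ e) (G3.sgen3 _ e)
      (G3.sgen4 _ e) (G3.sgen5 _ e) (G3.x_pow _ e) (G3.y_pow _ e) (G3.comm_y _ e)
    rw [N1.commutator_eq]
    first | exact ⟨0, by decide⟩ | exact ⟨1, by decide⟩ | exact ⟨-1, by decide⟩
end

section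
/- For every integer e ≥ 5 and each i ∈ {2,3}, there exists a finite metabelian σ-group M of order 3^{6+e}, generated by two elements x and y satisfying w^3 = 1, y^3 = s₃^2 s₄, s₂^3 = s₄^2 s₅, s₃^3 = s₅^2, and t₃ = s₅ w^{i-1}, whose abelianization is isomorphic to (ZMod (3^e)) × (ZMod 3); moreover there exists a finite group G of order 3^{7+e} with the same abelianization, admitting a σ-automorphism, with second derived subgroup nontrivial and third derived subgroup trivial (derived length exactly 3), such that G/G'' is isomorphic to M. -/
namespace TD

/-- The lattice part: `ℤ[ζ]` modulo a suitable ideal, with basis `y, s`. -/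
abbrev V := ZMod 27 × ZMod 9

/-- multiplication by 9 from `ZMod 9` to `ZMod 27`. -/
def n9 (t : ZMod 9) : ZMod 27 := 9 * (t.val : ZMod 27)
/-- multiplication by 3 from `ZMod 9` to `ZMod 27`. -/
def m3 (t : ZMod 9) : ZMod 27 := 3 * (t.val : ZMod 27)
/-- reduction. -/
def r : ZMod 27 →+* ZMod 9 := ZMod.castHom (by decide) _

lemma n9_add : ∀ s t, n9 (s + t) = n9 s + n9 t := by decide
lemma n9_neg : ∀ s, n9 (-s) = - n9 s := by decide
lemma m3_add : ∀ s t, m3 (s + t) = m3 s + m3 t := by decide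
lemma m3_neg : ∀ s, m3 (-s) = - m3 s := by decide
lemma m3_sub (s t : ZMod 9) : m3 (s - t) = m3 s - m3 t := by
  rw [sub_eq_add_neg, m3_add, m3_neg, sub_eq_add_neg]
lemma m3_two : ∀ s, m3 (2 * s) = 2 * m3 s := by decide
lemma m3_three : ∀ s, m3 (3 * s) = 3 * m3 s := by decide
lemma n9_zero : n9 0 = 0 := by decide
lemma m3_zero : m3 0 = 0 := by decide
lemma r_n9 : ∀ t, r (n9 t) = 0 := by decide
lemma r_m3 : ∀ t, r (m3 t) = 3 * t := by decide
lemma m3_r : ∀ b, m3 (r b) = 3 * b := by decide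

/-- the action of `ζ` -/
def al (v : V) : V := (v.1 - m3 v.2, r v.1 - 2 * v.2)

/-- half the determinant form -/
def B (u v : V) : ZMod 9 := 5 * (u.2 * r v.1 - v.2 * r u.1)

lemma al_add (u v : V) : al (u + v) = al u + al v := by
  ext <;> simp [al, m3_add] <;> ring

lemma al3 (v : V) : al (al (al v)) = v := by
  ext
  · simp only [al, m3_sub, m3_two, m3_three, m3_r, map_sub, r_m3]; ring
  · simp only [al, m3_sub, m3_two, m3_r, map_sub, r_m3, map_mul, map_ofNat]; ring

lemma B_al (u v : V) : B (al u) (al v) = B u v := by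
  simp only [B, al, map_sub, r_m3]; ring

lemma B_add_left (u u' v : V) : B (u + u') v = B u v + B u' v := by
  simp only [B, Prod.fst_add, Prod.snd_add, map_add]; ring
lemma B_add_right (u v v' : V) : B u (v + v') = B u v + B u v' := by
  simp only [B, Prod.fst_add, Prod.snd_add, map_add]; ring
lemma B_neg_left (u v : V) : B (-u) v = - B u v := by
  simp only [B, Prod.fst_neg, Prod.snd_neg, map_neg]; ring
lemma B_neg_right (u v : V) : B u (-v) = - B u v := by
  simp only [B, Prod.fst_neg, Prod.snd_neg, map_neg]; ring
lemma B_self (u : V) : B u u = 0 := by simp [B]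
lemma B_swap (u v : V) : B v u = - B u v := by simp only [B]; ring
lemma B_zero_left (v : V) : B 0 v = 0 := by simp [B]
lemma B_zero_right (v : V) : B v 0 = 0 := by simp [B]

/-- the central direction -/
def e1 (t : ZMod 9) : V := (n9 t, 0)
lemma e1_add (s t : ZMod 9) : e1 (s + t) = e1 s + e1 t := by simp [e1, n9_add]
lemma e1_neg (s : ZMod 9) : e1 (-s) = - e1 s := by simp [e1, n9_neg]
lemma e1_zero : e1 0 = 0 := by simp [e1, n9_zero]
lemma B_e1_left (t : ZMod 9) (v : V) : B (e1 t) v = 0 := by simp [B, e1, r_n9]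
lemma B_e1_right (t : ZMod 9) (v : V) : B v (e1 t) = 0 := by simp [B, e1, r_n9]
lemma al_e1 (t : ZMod 9) : al (e1 t) = e1 t := by simp [al, e1, r_n9, m3_zero]

/-- action of powers of `x` -/
def rho (j : ZMod 3) (v : V) : V := if j = 0 then v else if j = 1 then al (al v) else al v

lemma zmod3 (j : ZMod 3) : j = 0 ∨ j = 1 ∨ j = 2 := by revert j; decide

lemma rho_0 (v : V) : rho 0 v = v := rfl
lemma rho_1 (v : V) : rho 1 v = al (al v) := rfl
lemma rho_2 (v : V) : rho 2 v = al v := rfl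

lemma rho_add (j : ZMod 3) (u v : V) : rho j (u + v) = rho j u + rho j v := by
  rcases zmod3 j with rfl | rfl | rfl <;> simp only [rho_0, rho_1, rho_2, al_add]
lemma rho_e1 (j : ZMod 3) (t : ZMod 9) : rho j (e1 t) = e1 t := by
  rcases zmod3 j with rfl | rfl | rfl <;> simp only [rho_0, rho_1, rho_2, al_e1]
lemma B_rho (j : ZMod 3) (u v : V) : B (rho j u) (rho j v) = B u v := by
  rcases zmod3 j with rfl | rfl | rfl <;> simp only [rho_0, rho_1, rho_2, B_al]
lemma rho_rho (i j : ZMod 3) (v : V) : rho i (rho j v) = rho (i + j) v := by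
  have h1 : (1 + 1 : ZMod 3) = 2 := by decide
  have h2 : (1 + 2 : ZMod 3) = 0 := by decide
  have h3 : (2 + 1 : ZMod 3) = 0 := by decide
  have h4 : (2 + 2 : ZMod 3) = 1 := by decide
  rcases zmod3 i with rfl | rfl | rfl <;> rcases zmod3 j with rfl | rfl | rfl <;>
    simp only [rho_0, rho_1, rho_2, al3, h1, h2, h3, h4, zero_add, add_zero]
lemma rho_zero (j : ZMod 3) : rho j 0 = 0 := by
  have := rho_e1 j 0
  rwa [e1_zero] at this

/-- The twist used for the sigma automorphism. -/
def ta (v : V) : V := (-v.1 + m3 v.2, v.2)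
lemma ta_add (u v : V) : ta (u + v) = ta u + ta v := by
  ext <;> simp [ta, m3_add]; ring
lemma ta_ta (v : V) : ta (ta v) = v := by ext <;> simp [ta]
lemma ta_e1 (t : ZMod 9) : ta (e1 t) = - e1 t := by simp [ta, e1, m3_zero]
lemma B_ta (u v : V) : B (ta u) (ta v) = - B u v := by
  simp only [B, ta, map_add, map_neg, r_m3]; ring
lemma ta_al (v : V) : ta (al v) = al (al (ta v)) := by
  ext
  · simp only [ta, al, m3_sub, m3_add, m3_neg, m3_three, m3_two, m3_r, map_sub, map_add, map_neg, r_m3]; ring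
  · simp only [ta, al, map_sub, map_add, map_neg, r_m3]; ring
lemma ta_rho (j : ZMod 3) (v : V) : ta (rho j v) = rho (-j) (ta v) := by
  have h1 : (-1 : ZMod 3) = 2 := by decide
  have h2 : (-2 : ZMod 3) = 1 := by decide
  rcases zmod3 j with rfl | rfl | rfl <;>
    simp only [rho_0, rho_1, rho_2, h1, h2, neg_zero, ta_al, al3]

/-- Data: `K` the group of powers of `x`, `io t = w ^ t`. -/
structure Dat (K : Type) [AddCommGroup K] where
  c : ZMod 9
  io : ZMod 9 →+ K
  ch : K →+ ZMod 3
  h : ∀ t, ch (io t) = 0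

/-- elements `v x^k`. -/
@[ext] structure P {K : Type} [AddCommGroup K] (D : Dat K) where
  v : V
  k : K

variable {K : Type} [AddCommGroup K] {D : Dat K}

instance : Mul (P D) := ⟨fun p q =>
  ⟨p.v + rho (D.ch p.k) q.v + e1 (B p.v (rho (D.ch p.k) q.v)),
   p.k + q.k + D.io (D.c * B p.v (rho (D.ch p.k) q.v))⟩⟩
instance : One (P D) := ⟨⟨0, 0⟩⟩
instance : Inv (P D) := ⟨fun p => ⟨-rho (-D.ch p.k) p.v, -p.k⟩⟩

lemma mul_v (p q : P D) : (p * q).v =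
    p.v + rho (D.ch p.k) q.v + e1 (B p.v (rho (D.ch p.k) q.v)) := rfl
lemma mul_k (p q : P D) : (p * q).k =
    p.k + q.k + D.io (D.c * B p.v (rho (D.ch p.k) q.v)) := rfl
lemma one_v : (1 : P D).v = 0 := rfl
lemma one_k : (1 : P D).k = 0 := rfl
lemma inv_v (p : P D) : (p⁻¹).v = -rho (-D.ch p.k) p.v := rfl
lemma inv_k (p : P D) : (p⁻¹).k = -p.k := rfl

instance : Group (P D) := Group.ofLeftAxioms
  (by
    intro p q s
    ext1
    · simp only [mul_v, mul_k, map_add, D.h, add_zero, rho_add, rho_e1, rho_rho, B_add_left,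
        B_add_right, B_e1_left, B_e1_right, e1_add]
      rw [← rho_rho, B_rho]
      abel
    · simp only [mul_v, mul_k, map_add, D.h, add_zero, rho_add, rho_e1, rho_rho, B_add_left,
        B_add_right, B_e1_left, B_e1_right, mul_add]
      rw [← rho_rho, B_rho]
      abel)
  (by
    intro p
    ext1
    · simp [mul_v, one_v, one_k, rho_0, B_zero_left, e1_zero]
    · simp [mul_k, one_v, one_k, B_zero_left])
  (by
    intro p
    ext1
    · simp [mul_v, inv_v, inv_k, one_v, B_neg_left, B_self, e1_zero]
    · simp [mul_k, inv_v, inv_k, one_k, B_neg_left, B_self])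

lemma pow_x (k : K) (n : ℕ) : (⟨0, k⟩ : P D) ^ n = ⟨0, n • k⟩ := by
  induction n with
  | zero => simp; rfl
  | succ n ih =>
    rw [pow_succ, ih]
    ext1
    · simp [mul_v, rho_zero, B_zero_left, e1_zero]
    · simp [mul_k, rho_zero, B_zero_left, add_smul]

lemma B_nsmul (n : ℕ) (v : V) : B (n • v) v = 0 := by
  induction n with
  | zero => simp [B_zero_left]
  | succ n ih => rw [succ_nsmul, B_add_left, ih, B_self, add_zero]

lemma pow_v (v : V) (n : ℕ) : (⟨v, 0⟩ : P D) ^ n = ⟨n • v, 0⟩ := by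
  induction n with
  | zero => simp; rfl
  | succ n ih =>
    rw [pow_succ, ih]
    ext1
    · simp only [mul_v, map_zero, rho_0, B_nsmul, e1_zero, add_zero, succ_nsmul]
    · simp only [mul_k, map_zero, rho_0, B_nsmul, mul_zero, add_zero]

/-- multiplication when the left factor acts trivially. -/
lemma mul_H (u v : V) (k l : K) (hk : D.ch k = 0) : (⟨u, k⟩ * ⟨v, l⟩ : P D) =
    ⟨u + v + e1 (B u v), k + l + D.io (D.c * B u v)⟩ := by
  ext1
  · simp [mul_v, hk, rho_0]
  · simp [mul_k, hk, rho_0]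

lemma inv_H (u : V) (k : K) (hk : D.ch k = 0) : (⟨u, k⟩ : P D)⁻¹ = ⟨-u, -k⟩ := by
  ext1
  · simp [inv_v, hk, rho_0]
  · simp [inv_k]

lemma comm_H (u v : V) (k l : K) (hk : D.ch k = 0) (hl : D.ch l = 0) :
    comm' (⟨u, k⟩ : P D) ⟨v, l⟩ = ⟨e1 (2 * B u v), D.io (D.c * (2 * B u v))⟩ := by
  have e2 : ∀ t, e1 (2 * t) = e1 t + e1 t := fun t => by rw [two_mul, e1_add]
  unfold comm'
  rw [inv_H _ _ hk, inv_H _ _ hl, mul_H (-u) _ _ _ (by simp [hk]),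
    mul_H (-u + -v + _) _ _ _ (by simp [hk, hl, D.h]), mul_H _ _ _ _ (by simp [hk, hl, D.h])]
  ext1
  · simp only [B_add_left, B_e1_left, B_neg_left, B_neg_right, B_self, e2, B_swap u v, e1_add, e1_neg, e1_zero, neg_neg, neg_zero, add_zero, B_zero_left]
    abel
  · simp only [B_add_left, B_e1_left, B_neg_left, B_neg_right, B_self, B_swap u v, two_mul, mul_add, map_add, map_neg, mul_neg, neg_neg, neg_zero, add_zero, mul_zero, map_zero]
    abel

lemma comm_x (u : V) (k l : K) (hk : D.ch k = 0) (hl : D.ch l = 1) :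
    comm' (⟨u, k⟩ : P D) ⟨0, l⟩ =
      ⟨al u - u - e1 (B u (al u)), - D.io (D.c * B u (al u))⟩ := by
  have h2 : D.ch (-l) = 2 := by rw [map_neg, hl]; decide
  have hx : (⟨0, l⟩ : P D)⁻¹ = ⟨0, -l⟩ := by
    ext1 <;> simp [inv_v, inv_k, rho_zero]
  have h3 : (⟨0, -l⟩ * ⟨u, k⟩ * ⟨0, l⟩ : P D) = ⟨al u, k⟩ := by
    ext1
    · simp [mul_v, h2, rho_2, rho_zero, B_zero_left, B_zero_right, e1_zero]
    · simp [mul_v, mul_k, h2, rho_2, rho_zero, B_zero_left, B_zero_right, e1_zero]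
  unfold comm'
  rw [hx, mul_assoc, mul_assoc, ← mul_assoc _ _ (⟨0, l⟩ : P D), h3, inv_H _ _ hk, mul_H _ _ _ _ (by simp [hk])]
  ext1
  · simp only [B_neg_left, e1_neg]; abel
  · simp only [B_neg_left, mul_neg, map_neg]; abel

end TD
namespace TD

open scoped commutatorElement

variable {K : Type} [AddCommGroup K] {D : Dat K}

lemma comm_eq {G : Type*} [Group G] (a b : G) : comm' a b = ⁅a⁻¹, b⁻¹⁆ := by
  simp [comm', commutatorElement_def]

lemma comm_mem {G : Type*} [Group G] {H₁ H₂ : Subgroup G} {a b : G} (ha : a ∈ H₁) (hb : b ∈ H₂) :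
    comm' a b ∈ ⁅H₁, H₂⁆ := by
  rw [comm_eq]
  exact Subgroup.commutator_mem_commutator (inv_mem ha) (inv_mem hb)

lemma conj_x (u : V) (k l : K) (hl : D.ch l = 1) :
    (⟨0, l⟩⁻¹ * ⟨u, k⟩ * ⟨0, l⟩ : P D) = ⟨al u, k⟩ := by
  have h2 : D.ch (-l) = 2 := by rw [map_neg, hl]; decide
  have hx : (⟨0, l⟩ : P D)⁻¹ = ⟨0, -l⟩ := by
    ext1 <;> simp [inv_v, inv_k, rho_zero]
  rw [hx]
  ext1
  · simp [mul_v, h2, rho_2, rho_zero, B_zero_left, B_zero_right, e1_zero]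
  · simp [mul_v, mul_k, h2, rho_2, rho_zero, B_zero_left, B_zero_right, e1_zero]

/-- reduction mod 3 -/
def q : ZMod 27 →+* ZMod 3 := ZMod.castHom (by decide) _
lemma q_m3 : ∀ t, q (m3 t) = 0 := by decide
lemma q_n9 : ∀ t, q (n9 t) = 0 := by decide
lemma q_ker : ∀ b, q b = 0 → ∃ a, b = m3 a := by decide
lemma q_surj : ∀ t, ∃ b, q b = t := by decide
lemma r_surj : ∀ t, ∃ b, r b = t := by decide
lemma n9_m3 : ∀ t, n9 t = m3 (3 * t) := by decide
lemma n9_3 : ∀ t, n9 (3 * t) = 0 := by decide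

lemma q_rho (j : ZMod 3) (v : V) : q (rho j v).1 = q v.1 := by
  rcases zmod3 j with rfl | rfl | rfl <;> simp [rho_0, rho_1, rho_2, al, q_m3]

/-- Extra data about the abelianization. -/
structure Ext (D : Dat K) (n : ℕ) where
  ka : K →+ ZMod n
  surj : Function.Surjective ka
  ker : ∀ k, ka k = 0 ↔ ∃ t, k = D.io t
  d : ZMod 9
  hd : D.c * d = 1
  l : K
  hl : D.ch l = 1
  gen : ∀ k, ∃ m : ℕ, k = m • l

variable {n : ℕ}

/-- the abelianization map -/
def psi (E : Ext D n) : P D →* Multiplicative (ZMod n × ZMod 3) where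
  toFun g := Multiplicative.ofAdd (E.ka g.k, q g.v.1)
  map_one' := by simp [one_v, one_k]
  map_mul' g h := by
    have h0 : ∀ t, E.ka (D.io t) = 0 := fun t => (E.ker _).2 ⟨t, rfl⟩
    rw [← ofAdd_add]
    congr 1
    ext1
    · simp [mul_k, h0]
    · simp [mul_v, q_rho, e1, q_n9]

lemma psi_surj (E : Ext D n) : Function.Surjective (psi E) := by
  intro z
  obtain ⟨k, hk⟩ := E.surj z.toAdd.1
  obtain ⟨b, hb⟩ := q_surj z.toAdd.2
  refine ⟨⟨(b, 0), k⟩, ?_⟩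
  apply Multiplicative.toAdd.injective
  ext1
  · exact hk
  · exact hb

lemma mem_ker (E : Ext D n) (g : P D) :
    g ∈ (psi E).ker ↔ (∃ a, g.v.1 = m3 a) ∧ ∃ t, g.k = D.io t := by
  rw [MonoidHom.mem_ker, ← E.ker]
  constructor
  · intro h
    have h' : (E.ka g.k, q g.v.1) = (0, 0) := Multiplicative.ofAdd.injective h
    rw [Prod.mk.injEq] at h'
    exact ⟨q_ker _ h'.2, h'.1⟩
  · rintro ⟨⟨a, ha⟩, h⟩
    change Multiplicative.ofAdd (E.ka g.k, q g.v.1) = 1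
    rw [ha, q_m3, h]; rfl

lemma ker_psi (E : Ext D n) : (psi E).ker = commutator (P D) := by
  apply le_antisymm _ (Abelianization.commutator_subset_ker _)
  have hc : ∀ a b : P D, comm' a b ∈ commutator (P D) := fun a b =>
    comm_mem (Subgroup.mem_top a) (Subgroup.mem_top b)
  have h1 : ∀ t, (⟨e1 t, D.io (D.c * t)⟩ : P D) ∈ commutator (P D) := by
    intro t
    obtain ⟨b, rfl⟩ := r_surj t
    have := hc ⟨(0, 1), 0⟩ ⟨(b, 0), 0⟩
    rw [comm_H _ _ _ _ (map_zero _) (map_zero _)] at this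
    have e : 2 * B (0, 1) (b, 0) = r b := by
      simp only [B]
      have : (10 : ZMod 9) = 1 := by decide
      linear_combination (r b) * this
    rwa [e] at this
  have h2 : ∀ u, (⟨al u - u, 0⟩ : P D) ∈ commutator (P D) := by
    intro u
    have := mul_mem (hc ⟨u, 0⟩ ⟨0, E.l⟩) (h1 (B u (al u)))
    rw [comm_x _ _ _ (map_zero _) E.hl, mul_H _ _ _ _ (by simp [D.h])] at this
    simpa [B_e1_right, e1_zero] using this
  have h3 : ∀ a' a, (⟨(m3 a', a), 0⟩ : P D) ∈ commutator (P D) := by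
    intro a' a
    obtain ⟨b, hb⟩ := r_surj (a - 3 * a')
    have := h2 (b, -a')
    have e : al (b, -a') - (b, -a') = (m3 a', a) := by
      ext1
      · simp [al, m3_neg]
      · simp [al, hb]; ring
    rwa [e] at this
  have h4 : ∀ t, (⟨0, D.io t⟩ : P D) ∈ commutator (P D) := by
    intro t
    have := mul_mem (h1 (E.d * t)) (h3 (-(3 * (E.d * t))) 0)
    rw [mul_H _ _ _ _ (D.h _), m3_neg, ← n9_m3, ← mul_assoc, E.hd] at this
    have e : ((-n9 (E.d * t), 0) : V) = - e1 (E.d * t) := by simp [e1]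
    rw [e] at this
    simpa [B_e1_left, e1_zero] using this
  intro g hg
  obtain ⟨⟨a, ha⟩, t, ht⟩ := (mem_ker E g).1 hg
  have := mul_mem (h3 a g.v.2) (h4 t)
  rw [mul_H _ _ _ _ (map_zero _)] at this
  convert this using 1
  ext1
  · ext1
    · simp [B_zero_right, e1_zero, ha]
    · simp [B_zero_right, e1_zero]
  · simp [B_zero_right, ht]

lemma abel_iso (E : Ext D n) :
    Nonempty (Abelianization (P D) ≃* Multiplicative (ZMod n × ZMod 3)) :=
  ⟨(QuotientGroup.quotientMulEquivOfEq (ker_psi E).symm).trans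
    (QuotientGroup.quotientKerEquivOfSurjective (psi E) (psi_surj E))⟩

/-- the sigma automorphism -/
def sig (D : Dat K) : P D ≃* P D where
  toFun g := ⟨ta g.v, -g.k⟩
  invFun g := ⟨ta g.v, -g.k⟩
  left_inv g := by ext1 <;> simp [ta_ta]
  right_inv g := by ext1 <;> simp [ta_ta]
  map_mul' g h := by
    ext1
    · simp [mul_v, ta_add, ta_rho, ta_e1, ← B_ta, ← e1_neg]
    · simp [mul_k, ← ta_rho, B_ta]; abel

lemma isSigma (E : Ext D n) : IsSigmaGroup (P D) := by
  refine ⟨sig D, fun g => ?_⟩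
  have h : sig D g * g ∈ commutator (P D) := by
    rw [← ker_psi E, MonoidHom.mem_ker, map_mul]
    change Multiplicative.ofAdd (E.ka (-g.k), q (-g.v.1 + m3 g.v.2)) *
      Multiplicative.ofAdd (E.ka (g.k), q (g.v.1)) = 1
    rw [← ofAdd_add]
    simp [q_m3]
  rw [eq_inv_iff_mul_eq_one, ← map_mul]
  exact (QuotientGroup.eq_one_iff _).2 h

lemma derived1 (E : Ext D n) : derivedSeries (P D) 1 = (psi E).ker := by
  rw [ker_psi, derivedSeries_one]

lemma derived2 (E : Ext D n) (g : P D) :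
    g ∈ derivedSeries (P D) 2 ↔ g.v = 0 ∧ ∃ t, g.k = D.io (3 * t) := by
  rw [derivedSeries_succ, derived1 E]
  constructor
  · let T : Subgroup (P D) :=
      { carrier := {g | g.v = 0 ∧ ∃ t, g.k = D.io (3 * t)}
        one_mem' := ⟨rfl, 0, by simp [one_k]⟩
        mul_mem' := by
          rintro ⟨_, _⟩ ⟨_, _⟩ ⟨rfl, s, rfl⟩ ⟨rfl, t, rfl⟩
          rw [mul_H _ _ _ _ (D.h _)]
          refine ⟨by simp [B_zero_left, e1_zero], s + t, by simp [B_zero_left, mul_add]⟩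
        inv_mem' := by
          rintro ⟨_, _⟩ ⟨rfl, s, rfl⟩
          rw [inv_H _ _ (D.h _)]
          exact ⟨by simp, -s, by simp⟩ }
    have : ⁅(psi E).ker, (psi E).ker⁆ ≤ T := by
      rw [Subgroup.commutator_le]
      intro g hg h hh
      have hc : ⁅g, h⁆ = comm' g⁻¹ h⁻¹ := by rw [comm_eq, inv_inv, inv_inv]
      rw [hc]
      obtain ⟨⟨a, ha⟩, s, hs⟩ := (mem_ker E _).1 (inv_mem hg)
      obtain ⟨⟨b, hb⟩, t, ht⟩ := (mem_ker E _).1 (inv_mem hh)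
      have := comm_H (D := D) (g⁻¹).v (h⁻¹).v (g⁻¹).k (h⁻¹).k (by rw [hs, D.h]) (by rw [ht, D.h])
      change comm' g⁻¹ h⁻¹ = _ at this
      rw [this]
      have e : 2 * B (g⁻¹).v (h⁻¹).v = 3 * (10 * ((g⁻¹).v.2 * b - (h⁻¹).v.2 * a)) := by
        simp only [B, ha, hb, r_m3]; ring
      rw [e]
      refine ⟨?_, D.c * (10 * ((g⁻¹).v.2 * b - (h⁻¹).v.2 * a)), ?_⟩
      · simp only [e1, n9_3]; rfl
      · change D.io _ = _
        congr 1; ring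
    exact fun h => this h
  · rintro ⟨hv, t, ht⟩
    have h1 : (⟨(0, 1), 0⟩ : P D) ∈ (psi E).ker :=
      (mem_ker E _).2 ⟨⟨0, by simp [m3_zero]⟩, 0, by simp⟩
    have h2 : (⟨(m3 (E.d * t), 0), 0⟩ : P D) ∈ (psi E).ker :=
      (mem_ker E _).2 ⟨⟨_, rfl⟩, 0, by simp⟩
    have := comm_mem h1 h2
    rw [comm_H _ _ _ _ (map_zero _) (map_zero _)] at this
    have e : 2 * B (0, 1) (m3 (E.d * t), 0) = 3 * (E.d * t) := by
      simp only [B, r_m3]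
      have : (10 : ZMod 9) = 1 := by decide
      linear_combination (3 * (E.d * t)) * this
    rw [e] at this
    convert this using 1
    ext1
    · rw [hv]; simp only [e1, n9_3]; rfl
    · rw [ht]
      change _ = D.io _
      congr 1
      linear_combination (-3 * t) * E.hd

lemma derived3 (E : Ext D n) : derivedSeries (P D) 3 = ⊥ := by
  rw [derivedSeries_succ, eq_bot_iff, Subgroup.commutator_le]
  intro g hg h hh
  obtain ⟨hv, s, hs⟩ := (derived2 E _).1 (inv_mem hg)
  obtain ⟨hv', t, ht⟩ := (derived2 E _).1 (inv_mem hh)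
  have hc : ⁅g, h⁆ = comm' g⁻¹ h⁻¹ := by rw [comm_eq, inv_inv, inv_inv]
  have := comm_H (D := D) (g⁻¹).v (h⁻¹).v (g⁻¹).k (h⁻¹).k (by rw [hs, D.h]) (by rw [ht, D.h])
  change comm' g⁻¹ h⁻¹ = _ at this
  rw [hc, this, hv, hv', Subgroup.mem_bot]
  simp [B_zero_left, e1_zero]; rfl

lemma closure_top (E : Ext D n) :
    Subgroup.closure {(⟨0, E.l⟩ : P D), ⟨(1, 0), 0⟩} = ⊤ := by
  rw [eq_top_iff]
  set C := Subgroup.closure {(⟨0, E.l⟩ : P D), ⟨(1, 0), 0⟩} with hC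
  have hx : (⟨0, E.l⟩ : P D) ∈ C := Subgroup.subset_closure (by simp)
  have hy : (⟨(1, 0), 0⟩ : P D) ∈ C := Subgroup.subset_closure (by simp)
  have h1 : ∀ k, (⟨0, k⟩ : P D) ∈ C := by
    intro k
    obtain ⟨m, rfl⟩ := E.gen k
    rw [← pow_x]; exact pow_mem hx m
  have h2 : ∀ b, (⟨(b, 0), 0⟩ : P D) ∈ C := by
    intro b
    have := pow_mem hy b.val
    rw [pow_v] at this
    simpa using this
  have h3 : (⟨(1, 1), 0⟩ : P D) ∈ C := by
    have := mul_mem (mul_mem (inv_mem hx) hy) hx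
    rw [conj_x _ _ _ E.hl] at this
    have e : al (1, 0) = (1, 1) := by decide
    rwa [e] at this
  have h4 : ∀ a : ZMod 9, (⟨((a.val : ZMod 27), a), 0⟩ : P D) ∈ C := by
    intro a
    have := pow_mem h3 a.val
    rw [pow_v] at this
    simpa using this
  rintro ⟨⟨b, a⟩, k⟩ -
  set a' : ZMod 27 := (a.val : ZMod 27) with ha'
  set be : ZMod 9 := 5 * (0 - a * r (b - a')) with hbe
  have hB : B (b - a' - n9 be, 0) (a', a) = be := by
    simp only [B, map_sub, r_n9, hbe, zero_mul, sub_zero]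
  have := mul_mem (mul_mem (h2 (b - a' - n9 be)) (h4 a)) (h1 (k - D.io (D.c * be)))
  rw [mul_H _ _ _ _ (map_zero _), mul_H _ _ _ _ (by simp [D.h]), ← ha', hB] at this
  convert this using 1
  ext1
  · ext1
    · simp only [B_zero_right, e1, n9_zero, Prod.fst_add, Prod.fst_zero]; ring
    · simp [B_zero_right, e1]
  · simp [B_zero_right]

end TD
namespace TD

/-- The embedding of the powers of `w`. -/
def ioC (e f : ℕ) (hf : f ≤ e + 2) : ZMod 9 →+ ZMod (3 ^ f) :=
  ZMod.lift 9 ⟨zmultiplesHom (ZMod (3 ^ f)) ((3 ^ e : ℕ) : ZMod (3 ^ f)), by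
    rw [zmultiplesHom_apply, natCast_zsmul, nsmul_eq_mul, ← Nat.cast_mul,
      ZMod.natCast_eq_zero_iff]
    calc 3 ^ f ∣ 3 ^ (e + 2) := pow_dvd_pow 3 hf
      _ = 9 * 3 ^ e := by ring⟩

lemma ioC_int (e f : ℕ) (hf : f ≤ e + 2) (m : ℤ) :
    ioC e f hf (m : ZMod 9) = ((m * 3 ^ e : ℤ) : ZMod (3 ^ f)) := by
  unfold ioC
  rw [ZMod.lift_coe]
  simp

lemma ioC_one (e f : ℕ) (hf : f ≤ e + 2) : ioC e f hf 1 = ((3 ^ e : ℕ) : ZMod (3 ^ f)) := by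
  have := ioC_int e f hf 1
  simpa using this

/-- concrete data -/
def DD (e f : ℕ) (h1 : 1 ≤ e) (h2 : e ≤ f) (hf : f ≤ e + 2) (c : ZMod 9) : Dat (ZMod (3 ^ f)) where
  c := c
  io := ioC e f hf
  ch := (ZMod.castHom (dvd_pow_self 3 (by omega)) (ZMod 3)).toAddMonoidHom
  h t := by
    obtain ⟨m, rfl⟩ := ZMod.intCast_surjective t
    rw [ioC_int]
    simp only [RingHom.toAddMonoidHom_eq_coe, AddMonoidHom.coe_coe, map_intCast]
    rw [ZMod.intCast_zmod_eq_zero_iff_dvd] 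
    exact Dvd.dvd.mul_left (dvd_pow_self 3 (by omega)) _

/-- concrete extra data -/
def EE (e f : ℕ) (h1 : 1 ≤ e) (h2 : e ≤ f) (hf : f ≤ e + 2) (c d : ZMod 9) (hd : c * d = 1) :
    Ext (DD e f h1 h2 hf c) (3 ^ e) where
  ka := (ZMod.castHom (pow_dvd_pow 3 h2) (ZMod (3 ^ e))).toAddMonoidHom
  surj := ZMod.castHom_surjective (pow_dvd_pow 3 h2)
  ker k := by
    obtain ⟨m, rfl⟩ := ZMod.intCast_surjective k
    simp only [RingHom.toAddMonoidHom_eq_coe, AddMonoidHom.coe_coe, map_intCast]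
    change _ ↔ ∃ t, _ = ioC e f hf t
    constructor
    · intro h
      rw [ZMod.intCast_zmod_eq_zero_iff_dvd] at h
      obtain ⟨j, rfl⟩ := h
      refine ⟨(j : ZMod 9), ?_⟩
      rw [ioC_int, mul_comm]; simp
    · rintro ⟨t, ht⟩
      obtain ⟨j, rfl⟩ := ZMod.intCast_surjective t
      rw [ioC_int, ZMod.intCast_eq_intCast_iff_dvd_sub] at ht
      rw [ZMod.intCast_zmod_eq_zero_iff_dvd]
      have h3 : ((3 ^ e : ℕ) : ℤ) ∣ ((3 ^ f : ℕ) : ℤ) := by exact_mod_cast pow_dvd_pow 3 h2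
      have h4 : ((3 ^ e : ℕ) : ℤ) ∣ j * 3 ^ e := by simp
      exact (dvd_sub_right h4).1 (h3.trans ht)
  d := d
  hd := hd
  l := 1
  hl := by
    exact map_one (ZMod.castHom (dvd_pow_self 3 (by omega)) (ZMod 3))
  gen k := by
    have : NeZero (3 ^ f) := ⟨by positivity⟩
    exact ⟨k.val, by simp⟩

/-- forget to coordinates -/
def toProd {K : Type} [AddCommGroup K] (D : Dat K) : P D ≃ V × K where
  toFun g := (g.v, g.k)
  invFun p := ⟨p.1, p.2⟩
  left_inv _ := rfl
  right_inv _ := rfl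

instance (f : ℕ) : NeZero (3 ^ f) := ⟨by positivity⟩

instance (f : ℕ) (D : Dat (ZMod (3 ^ f))) : Finite (P D) := Finite.of_equiv _ (toProd D).symm

lemma card_P (f : ℕ) (D : Dat (ZMod (3 ^ f))) : Nat.card (P D) = 3 ^ (5 + f) := by
  rw [Nat.card_congr (toProd D), Nat.card_prod, Nat.card_prod, Nat.card_zmod, Nat.card_zmod,
    Nat.card_zmod, pow_add]
  norm_num

/-- functoriality in `K` -/
def mapK {K L : Type} [AddCommGroup K] [AddCommGroup L] (D : Dat K) (D' : Dat L) (th : K →+ L)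
    (hc : D.c = D'.c) (hio : ∀ t, th (D.io t) = D'.io t) (hch : ∀ k, D'.ch (th k) = D.ch k) :
    P D →* P D' where
  toFun g := ⟨g.v, th g.k⟩
  map_one' := by ext1 <;> simp [one_v, one_k]
  map_mul' g h := by
    ext1
    · simp [mul_v, hch]
    · simp [mul_k, hch, hc, hio]

section rel
variable {K : Type} [AddCommGroup K] {D : Dat K}

/-- `V`-part of the commutator with `x`. -/
def F (u : V) : V := al u - u - e1 (B u (al u))
/-- `w`-part of the commutator with `x`. -/
def Gt (c : ZMod 9) (u : V) : ZMod 9 := -(c * B u (al u))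

lemma comm_x' (u : V) (t : ZMod 9) (l : K) (hl : D.ch l = 1) :
    comm' (⟨u, D.io t⟩ : P D) ⟨0, l⟩ = ⟨F u, D.io (Gt D.c u)⟩ := by
  rw [comm_x _ _ _ (D.h _) hl, Gt, map_neg]; rfl

lemma pow_H (u : V) (t : ZMod 9) (m : ℕ) :
    (⟨u, D.io t⟩ : P D) ^ m = ⟨m • u, D.io (m • t)⟩ := by
  induction m with
  | zero => simp; rfl
  | succ m ih =>
    rw [pow_succ, ih, mul_H _ _ _ _ (D.h _), B_nsmul, e1_zero, mul_zero, map_zero, add_zero,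
      add_zero, succ_nsmul, succ_nsmul, map_add]

lemma mul_H' (u v : V) (s t : ZMod 9) : (⟨u, D.io s⟩ * ⟨v, D.io t⟩ : P D) =
    ⟨u + v + e1 (B u v), D.io (s + t + D.c * B u v)⟩ := by
  rw [mul_H _ _ _ _ (D.h _), map_add, map_add]

lemma comm_H' (u v : V) (s t : ZMod 9) :
    comm' (⟨u, D.io s⟩ : P D) ⟨v, D.io t⟩ = ⟨e1 (2 * B u v), D.io (D.c * (2 * B u v))⟩ :=
  comm_H _ _ _ _ (D.h _) (D.h _)

lemma eq_H (h3 : ∀ t, D.io (3 * t) = 0) {u v : V} {s t : ZMod 9} (h : u = v)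
    (h' : 3 * s = 3 * t) : (⟨u, D.io s⟩ : P D) = ⟨v, D.io t⟩ := by
  have : ∃ j, s = t + 3 * j := by revert s t; decide
  obtain ⟨j, rfl⟩ := this
  rw [h, map_add, h3, add_zero]

lemma relations (h3 : ∀ t, D.io (3 * t) = 0) (hc : D.c = 1 ∨ D.c = 2) (l : K) (hl : D.ch l = 1)
    (x y w : P D) (hx : x = ⟨0, l⟩) (hy : y = ⟨(1, 0), 0⟩) (hw : w = ⟨0, D.io 1⟩) :
    w ^ 3 = 1 ∧
    y ^ 3 = sgen x y 3 ^ 2 * sgen x y 4 ∧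
    sgen x y 2 ^ 3 = sgen x y 4 ^ 2 * sgen x y 5 ∧
    sgen x y 3 ^ 3 = sgen x y 5 ^ 2 ∧
    tgenD x y 3 = sgen x y 5 * w ^ (D.c.val) := by
  have hy : y = ⟨(1, 0), D.io 0⟩ := by rw [hy, map_zero]
  have h1 : (1 : P D) = ⟨0, D.io 0⟩ := by rw [map_zero]; rfl
  have s2 : sgen x y 2 = ⟨F (1, 0), D.io (Gt D.c (1, 0))⟩ := by
    rw [sgen, hx, hy, comm_x' _ _ _ hl]
  have s3 : sgen x y 3 = ⟨F (F (1, 0)), D.io (Gt D.c (F (1, 0)))⟩ := by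
    rw [sgen, s2, hx, comm_x' _ _ _ hl]
  have s4 : sgen x y 4 = ⟨F (F (F (1, 0))), D.io (Gt D.c (F (F (1, 0))))⟩ := by
    rw [sgen, s3, hx, comm_x' _ _ _ hl]
  have s5 : sgen x y 5 = ⟨F (F (F (F (1, 0)))), D.io (Gt D.c (F (F (F (1, 0)))))⟩ := by
    rw [sgen, s4, hx, comm_x' _ _ _ hl]
  have t3 : tgenD x y 3 = ⟨e1 (2 * B (F (1, 0)) (1, 0)),
      D.io (D.c * (2 * B (F (1, 0)) (1, 0)))⟩ := by
    change comm' (sgen x y 2) y = _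
    rw [s2, hy, comm_H']
  rw [s2, s3, s4, s5, t3, hw, hy, h1]
  simp only [pow_H, mul_H']
  rcases hc with hc | hc <;> rw [hc] <;>
    refine ⟨eq_H h3 ?_ ?_, eq_H h3 ?_ ?_, eq_H h3 ?_ ?_, eq_H h3 ?_ ?_, eq_H h3 ?_ ?_⟩ <;> decide

end rel

end TD

open TD in
theorem stmt11 (e i : ℕ) (he : 5 ≤ e) (hi : i = 2 ∨ i = 3) :
    ∃ (M : Type) (_ : Group M) (_ : Finite M) (x y : M),
      Subgroup.closure {x, y} = ⊤ ∧
      Nat.card M = 3 ^ (6 + e) ∧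
      IsMetabelian M ∧
      IsSigmaGroup M ∧
      (x ^ 3 ^ e) ^ 3 = 1 ∧
      y ^ 3 = sgen x y 3 ^ 2 * sgen x y 4 ∧
      sgen x y 2 ^ 3 = sgen x y 4 ^ 2 * sgen x y 5 ∧
      sgen x y 3 ^ 3 = sgen x y 5 ^ 2 ∧
      tgenD x y 3 = sgen x y 5 * (x ^ 3 ^ e) ^ (i - 1) ∧
      Nonempty (Abelianization M ≃* Multiplicative (ZMod (3 ^ e) × ZMod 3)) ∧
      ∃ (G : Type) (_ : Group G) (_ : Finite G),
        Nat.card G = 3 ^ (7 + e) ∧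
        Nonempty (Abelianization G ≃* Multiplicative (ZMod (3 ^ e) × ZMod 3)) ∧
        IsSigmaGroup G ∧
        derivedSeries G 2 ≠ ⊥ ∧
        derivedSeries G 3 = ⊥ ∧
        ∃ φ : G →* M, Function.Surjective φ ∧ φ.ker = derivedSeries G 2 := by
  obtain ⟨c, d, hcd, hc, hci⟩ : ∃ c d : ZMod 9, c * d = 1 ∧ (c = 1 ∨ c = 2) ∧ c.val = i - 1 := by
    rcases hi with rfl | rfl
    · exact ⟨1, 1, by decide, by decide, by decide⟩
    · exact ⟨2, 5, by decide, by decide, by decide⟩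
  let D1 := DD e (e + 1) (by omega) (by omega) (by omega) c
  let D2 := DD e (e + 2) (by omega) (by omega) (by omega) c
  let E1 : Ext D1 (3 ^ e) := EE e (e + 1) (by omega) (by omega) (by omega) c d hcd
  let E2 : Ext D2 (3 ^ e) := EE e (e + 2) (by omega) (by omega) (by omega) c d hcd
  have io3 : ∀ t, D1.io (3 * t) = 0 := by
    intro t
    obtain ⟨m, rfl⟩ := ZMod.intCast_surjective t
    have h := ioC_int e (e + 1) (by omega) (3 * m)
    push_cast at h
    change ioC e (e + 1) (by omega) _ = 0
    rw [h]
    have h0 : ((3 ^ (e + 1) : ℕ) : ZMod (3 ^ (e + 1))) = 0 := ZMod.natCast_self _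
    push_cast at h0
    linear_combination (m : ZMod (3 ^ (e + 1))) * h0
  have hw : (⟨0, E1.l⟩ : P D1) ^ 3 ^ e = ⟨0, D1.io 1⟩ := by
    rw [pow_x]
    change (⟨0, (3 ^ e : ℕ) • (1 : ZMod (3 ^ (e + 1)))⟩ : P D1) = ⟨0, ioC e (e + 1) (by omega) 1⟩
    rw [ioC_one, nsmul_one]
  obtain ⟨r1, r2, r3, r4, r5⟩ := relations (D := D1) io3 hc E1.l E1.hl _ _ _ rfl rfl hw
  refine ⟨P D1, inferInstance, inferInstance, ⟨0, E1.l⟩, ⟨(1, 0), 0⟩, closure_top E1, ?_, ?_,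
    isSigma E1, r1, r2, r3, r4, ?_, abel_iso E1, P D2, inferInstance, inferInstance, ?_,
    abel_iso E2, isSigma E2, ?_, derived3 E2, ?_⟩
  · rw [card_P]; congr 1; omega
  · rw [IsMetabelian, eq_bot_iff]
    intro g hg
    obtain ⟨hv, t, ht⟩ := (derived2 E1 g).1 hg
    rw [Subgroup.mem_bot]
    ext1
    · exact hv
    · rw [ht, io3]; rfl
  · rw [← hci]; exact r5
  · rw [card_P]; congr 1; omega
  · intro h
    have h1 : (⟨0, D2.io (3 * 1)⟩ : P D2) ∈ derivedSeries (P D2) 2 :=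
      (derived2 E2 _).2 ⟨rfl, 1, rfl⟩
    rw [h, Subgroup.mem_bot] at h1
    have h2 : ioC e (e + 2) (by omega) (3 * 1) = 0 := congrArg P.k h1
    have h3 := ioC_int e (e + 2) (by omega) 3
    push_cast at h3
    rw [mul_one, h3] at h2
    have h4 : ((3 * 3 ^ e : ℕ) : ZMod (3 ^ (e + 2))) = 0 := by push_cast; exact h2
    rw [ZMod.natCast_eq_zero_iff] at h4
    have h5 := Nat.le_of_dvd (by positivity) h4
    have h6 : 0 < 3 ^ e := by positivity
    rw [pow_add] at h5
    omega
  · let th : ZMod (3 ^ (e + 2)) →+ ZMod (3 ^ (e + 1)) :=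
      (ZMod.castHom (pow_dvd_pow 3 (by omega)) (ZMod (3 ^ (e + 1)))).toAddMonoidHom
    have thi : ∀ m : ℤ, th (m : ZMod (3 ^ (e + 2))) = (m : ZMod (3 ^ (e + 1))) := fun m =>
      map_intCast (ZMod.castHom (pow_dvd_pow 3 (by omega)) (ZMod (3 ^ (e + 1)))) m
    refine ⟨mapK D2 D1 th rfl ?_ ?_, ?_, ?_⟩
    · intro t
      obtain ⟨m, rfl⟩ := ZMod.intCast_surjective t
      change th (ioC e (e + 2) (by omega) _) = ioC e (e + 1) (by omega) _
      rw [ioC_int, ioC_int, thi]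
    · intro k
      obtain ⟨m, rfl⟩ := ZMod.intCast_surjective k
      rw [thi]
      exact (map_intCast (ZMod.castHom (dvd_pow_self 3 (by omega)) (ZMod 3)) m).trans
        (map_intCast (ZMod.castHom (dvd_pow_self 3 (by omega)) (ZMod 3)) m).symm
    · rintro ⟨v, k⟩
      obtain ⟨m, rfl⟩ := ZMod.intCast_surjective k
      exact ⟨⟨v, (m : ZMod (3 ^ (e + 2)))⟩, P.ext rfl (thi m)⟩
    · ext g
      rw [derived2 E2, MonoidHom.mem_ker]
      constructor
      · intro h
        refine ⟨congrArg P.v h, ?_⟩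
        have hk : th g.k = 0 := congrArg P.k h
        obtain ⟨m, hm⟩ := ZMod.intCast_surjective g.k
        rw [← hm, thi, ZMod.intCast_zmod_eq_zero_iff_dvd] at hk
        obtain ⟨j, rfl⟩ := hk
        refine ⟨(j : ZMod 9), ?_⟩
        change _ = ioC e (e + 2) (by omega) _
        have h3 := ioC_int e (e + 2) (by omega) (3 * j)
        push_cast at h3
        rw [h3, ← hm]
        push_cast
        ring
      · rintro ⟨hv, t, ht⟩
        refine P.ext hv ?_
        change th g.k = 0
        rw [ht]
        obtain ⟨j, rfl⟩ := ZMod.intCast_surjective t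
        change th (ioC e (e + 2) (by omega) _) = _
        have h3 := ioC_int e (e + 2) (by omega) (3 * j)
        push_cast at h3
        rw [h3]
        have h0 : ((3 ^ (e + 1) : ℕ) : ZMod (3 ^ (e + 1))) = 0 := ZMod.natCast_self _
        have h4 := thi (3 * j * 3 ^ e)
        push_cast at h4 h0
        rw [h4]
        linear_combination (j : ZMod (3 ^ (e + 1))) * h0
end

section
/- For every integer e ≥ 7 and each i ∈ {2,3}, there exists a finite metabelian σ-group M of order 3^{8+e}, generated by two elements x and y satisfying w^3 = 1, y^3 = s₇, s_j^3 = s_{j+2}^2 s_{j+3} for j = 2,3,4, s₅^3 = s₇^2, t₃ = s₃ w^{i-1}, and t_j = s_j for j = 4,…,7, whose abelianization is isomorphic to (ZMod (3^e)) × (ZMod 3); moreover there exists a finite group G of order 3^{10+e} with the same abelianization, admitting a σ-automorphism, with second derived subgroup nontrivial and third derived subgroup trivial (derived length exactly 3), such that G/G'' is isomorphic to M. -/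
/-- Parameters of the construction: a modulus `n` divisible by 3 and `W` with `27 W = 0`. -/
structure Par where
  n : ℕ
  W : ZMod n
  h3 : 3 ∣ n
  hW : 27 * W = 0
  hj : ZMod.castHom h3 (ZMod 3) W = 0

namespace Par

/-- The module `A = ℤ/81 v ⊕ ℤ/27 s`. -/
abbrev A := ZMod 81 × ZMod 27

/-- reduction mod 27 -/
def red : ZMod 81 →+* ZMod 27 := ZMod.castHom (by norm_num) (ZMod 27)

/-- multiplication by 3 from `ℤ/27` to `ℤ/81` -/
def iota : ZMod 27 →+ ZMod 81 where
  toFun b := 3 * (b.val : ZMod 81)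
  map_zero' := by decide
  map_add' := by decide

/-- reduction mod 3 -/
def r3 : ZMod 81 →+* ZMod 3 := ZMod.castHom (by norm_num) (ZMod 3)

lemma red_int (z : ℤ) : red (z : ZMod 81) = (z : ZMod 27) := by simp [red]
lemma r3_int (z : ℤ) : r3 (z : ZMod 81) = (z : ZMod 3) := by simp [r3]
lemma iota_int (z : ℤ) : iota (z : ZMod 27) = ((3 * z : ℤ) : ZMod 81) := by
  have h : (z : ZMod 27) = z • (1 : ZMod 27) := by simp
  have h1 : iota 1 = 3 := by decide
  rw [h, map_zsmul, h1]
  simp [mul_comm]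

lemma red_iota (b : ZMod 27) : red (iota b) = 3 * b := by
  obtain ⟨z, rfl⟩ := ZMod.intCast_surjective b
  rw [iota_int, red_int]; push_cast; ring

lemma iota_red (b : ZMod 81) : iota (red b) = 3 * b := by
  obtain ⟨z, rfl⟩ := ZMod.intCast_surjective b
  rw [red_int, iota_int]; push_cast; ring

lemma r3_iota (b : ZMod 27) : r3 (iota b) = 0 := by
  obtain ⟨z, rfl⟩ := ZMod.intCast_surjective b
  rw [iota_int, r3_int]; push_cast
  rw [show (3 : ZMod 3) = 0 by decide, zero_mul]

lemma iota27 (b : ZMod 27) : 27 * iota b = 0 := by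
  obtain ⟨z, rfl⟩ := ZMod.intCast_surjective b
  rw [iota_int]; push_cast
  rw [← mul_assoc, show (27 * 3 : ZMod 81) = 0 by decide, zero_mul]

/-- The action of `x` on `A`. -/
def T1 : AddMonoid.End A where
  toFun p := (p.1 - 10 * iota p.2, red p.1 - 2 * p.2)
  map_zero' := by simp
  map_add' p q := by
    ext
    · simp only [Prod.fst_add, Prod.snd_add, map_add]; ring
    · simp only [Prod.fst_add, Prod.snd_add, map_add]; ring

lemma T1_apply (p : A) : T1 p = (p.1 - 10 * iota p.2, red p.1 - 2 * p.2) := rfl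

lemma iota_two (b : ZMod 27) (k : ℕ) : iota ((k : ZMod 27) * b) = k * iota b := by
  rw [← nsmul_eq_mul, map_nsmul, nsmul_eq_mul]

lemma T1_sq (p : A) : T1 (T1 p) = (-29 * p.1 + 10 * iota p.2, - red p.1 + p.2) := by
  have h2 : iota (2 * p.2) = 2 * iota p.2 := iota_two p.2 2
  have h27 := iota27 p.2
  have h : (27 : ZMod 27) = 0 := by decide
  simp only [T1_apply, map_sub, map_mul, map_ofNat, red_iota, iota_red, h2]
  ext
  · simp only; ring
  · simp only; linear_combination (-p.2) * h

lemma T1_cube : T1 ^ 3 = 1 := by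
  ext1 p
  show T1 (T1 (T1 p)) = p
  rw [T1_sq]
  have h2 : iota (2 * p.2) = 2 * iota p.2 := iota_two p.2 2
  have h27 := iota27 p.2
  have h : (27 : ZMod 27) = 0 := by decide
  have h81 : (81 : ZMod 81) = 0 := by decide
  simp only [T1_apply, map_sub, map_mul, map_ofNat, red_iota, iota_red, h2]
  ext
  · simp only; linear_combination 10 * h27
  · simp only; linear_combination p.2 * h

/-- Power of the action. -/
def T (j : ZMod 3) : AddMonoid.End A := T1 ^ j.val

lemma T_zero : T 0 = 1 := rfl
lemma T_one : T 1 = T1 := pow_one _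
lemma T_add (i j : ZMod 3) : T (i + j) = T i * T j := by
  rw [T, T, T, ← pow_add, ZMod.val_add, ← pow_eq_pow_mod _ T1_cube]

/-- The determinant form. -/
def D (p q : A) : ZMod 27 := red p.1 * q.2 - red q.1 * p.2

lemma D_T1 (p q : A) : D (T1 p) (T1 q) = D p q := by
  simp only [D, T1_apply, map_sub, map_mul, map_ofNat, red_iota]
  have h : (27 : ZMod 27) = 0 := by decide
  linear_combination (red p.1 * q.2 - red q.1 * p.2) * h

lemma D_T (j : ZMod 3) (p q : A) : D (T j p) (T j q) = D p q := by
  rw [T]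
  induction j.val generalizing p q with
  | zero => rfl
  | succ k ih => rw [pow_succ]; exact (ih _ _).trans (D_T1 p q)

lemma D_add_left (p q r : A) : D (p + q) r = D p r + D q r := by
  simp only [D, Prod.fst_add, Prod.snd_add, map_add]; ring
lemma D_add_right (p q r : A) : D r (p + q) = D r p + D r q := by
  simp only [D, Prod.fst_add, Prod.snd_add, map_add]; ring
lemma D_zero_left (p : A) : D 0 p = 0 := by simp [D]
lemma D_zero_right (p : A) : D p 0 = 0 := by simp [D]
lemma D_self (p : A) : D p p = 0 := by simp [D]
lemma D_neg_left (p q : A) : D (-p) q = - D p q := by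
  simp only [D, Prod.fst_neg, Prod.snd_neg, map_neg]; ring

lemma r3_T (j : ZMod 3) (p : A) : r3 (T j p).1 = r3 p.1 := by
  rw [T]
  induction j.val generalizing p with
  | zero => rfl
  | succ k ih =>
    rw [pow_succ]; refine (ih _).trans ?_
    show r3 (p.1 - 10 * iota p.2) = _
    simp [r3_iota]

/-- The involution. -/
def tau : AddMonoid.End A where
  toFun p := (-p.1 + 10 * iota p.2, p.2)
  map_zero' := by simp
  map_add' p q := by
    ext
    · simp only [Prod.fst_add, Prod.snd_add, map_add]; ring
    · rfl

lemma tau_apply (p : A) : tau p = (-p.1 + 10 * iota p.2, p.2) := rfl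
lemma tau_tau (p : A) : tau (tau p) = p := by simp [tau_apply]
lemma D_tau (p q : A) : D (tau p) (tau q) = - D p q := by
  simp only [D, tau_apply, map_add, map_neg, map_mul, map_ofNat, red_iota]
  ring
lemma r3_tau (p : A) : r3 (tau p).1 = - r3 p.1 := by
  simp [tau_apply, r3_iota]

lemma tau_T1 (p : A) : tau (T1 p) = T1 (T1 (tau p)) := by
  rw [T1_sq]
  have h2 : iota (2 * p.2) = 2 * iota p.2 := iota_two p.2 2
  have h27 := iota27 p.2
  have h : (27 : ZMod 27) = 0 := by decide
  have h81 : (81 : ZMod 81) = 0 := by decide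
  simp only [T1_apply, tau_apply, map_sub, map_add, map_neg, map_mul, map_ofNat, red_iota,
    iota_red, h2]
  ext
  · simp only; linear_combination 10 * h27
  · simp only; linear_combination p.2 * h

lemma tau_T (j : ZMod 3) (p : A) : tau (T j p) = T (-j) (tau p) := by
  have h0 : ∀ p, T 0 p = p := fun _ => rfl
  have h1 : ∀ p, T 1 p = T1 p := fun _ => rfl
  have h2 : ∀ p, T 2 p = T1 (T1 p) := fun _ => rfl
  have hc : ∀ p, T1 (T1 (T1 p)) = p := fun p => congrArg (fun f : AddMonoid.End A => f p) T1_cube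
  fin_cases j
  · rfl
  · exact tau_T1 p
  · show tau (T1 (T1 p)) = T1 (tau p)
    rw [tau_T1, tau_T1, hc]

variable (P : Par)

/-- `k ↦ k W` on `ℤ/27`. -/
def th : ZMod 27 →+ ZMod P.n :=
  ZMod.lift 27 ⟨(AddMonoidHom.mulRight P.W).comp (Int.castAddHom (ZMod P.n)), by
    simpa using P.hW⟩

lemma th_int (z : ℤ) : P.th (z : ZMod 27) = z * P.W := by simp [th]

/-- reduction to `ℤ/3` of the last coordinate -/
def rc : ZMod P.n →+* ZMod 3 := ZMod.castHom P.h3 (ZMod 3)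

lemma rc_W : P.rc P.W = 0 := P.hj
lemma rc_th (k : ZMod 27) : P.rc (P.th k) = 0 := by
  obtain ⟨z, rfl⟩ := ZMod.intCast_surjective k
  rw [th_int, map_mul, rc_W, mul_zero]

/-- The underlying set of the group. -/
@[ext] structure Gp where
  p : A
  c : ZMod P.n

namespace Gp
variable {P}

/-- The exponent of `x₀`. -/
def j (g : P.Gp) : ZMod 3 := r3 g.p.1 + P.rc g.c

instance : Mul P.Gp := ⟨fun g h => ⟨T h.j g.p + h.p, g.c + h.c + P.th (D (T h.j g.p) h.p)⟩⟩
instance : One P.Gp := ⟨⟨0, 0⟩⟩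
instance : Inv P.Gp := ⟨fun g => ⟨- T (-g.j) g.p, - g.c⟩⟩

lemma mul_def (g h : P.Gp) :
    g * h = ⟨T h.j g.p + h.p, g.c + h.c + P.th (D (T h.j g.p) h.p)⟩ := rfl
lemma one_def : (1 : P.Gp) = ⟨0, 0⟩ := rfl
lemma inv_def (g : P.Gp) : g⁻¹ = ⟨- T (-g.j) g.p, - g.c⟩ := rfl

lemma j_mul (g h : P.Gp) : (g * h).j = g.j + h.j := by
  rw [mul_def]
  simp only [j, Prod.fst_add, map_add, r3_T, rc_th]
  ring

lemma j_one : (1 : P.Gp).j = 0 := by simp [j, one_def]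

instance : Group P.Gp := Group.ofLeftAxioms
  (by
    intro f g h
    have e1 := j_mul g h
    rw [mul_def f (g * h), mul_def (f * g) h, e1, mul_def f g, mul_def g h]
    simp only
    have : T (g.j + h.j) f.p = T h.j (T g.j f.p) := by
      rw [add_comm, T_add]; rfl
    rw [this]
    ext1
    · simp only [map_add]; abel
    · simp only [map_add, D_add_left, D_add_right, D_T]; abel)
  (by
    intro g
    rw [mul_def, one_def]
    ext1 <;> simp [D_zero_left])
  (by
    intro g
    rw [mul_def, one_def, inv_def]
    have : T g.j (T (-g.j) g.p) = g.p := by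
      have := T_add g.j (-g.j)
      rw [add_neg_cancel, T_zero] at this
      exact (congrArg (fun f : AddMonoid.End A => f g.p) this).symm
    ext1 <;> simp [D_neg_left, this, D_self])

lemma mul_j0 (g h : P.Gp) (hh : h.j = 0) :
    g * h = ⟨g.p + h.p, g.c + h.c + P.th (D g.p h.p)⟩ := by
  rw [mul_def, hh]; rfl

lemma mul_j1 (g h : P.Gp) (hh : h.j = 1) :
    g * h = ⟨T1 g.p + h.p, g.c + h.c + P.th (D (T1 g.p) h.p)⟩ := by
  rw [mul_def, hh]; rfl

lemma mk_mul_j0 (p q : A) (c d : ZMod P.n) (h : r3 q.1 + P.rc d = 0) :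
    (⟨p, c⟩ : P.Gp) * ⟨q, d⟩ = ⟨p + q, c + d + P.th (D p q)⟩ := mul_j0 _ _ h

lemma mk_mul_j1 (p q : A) (c d : ZMod P.n) (h : r3 q.1 + P.rc d = 1) :
    (⟨p, c⟩ : P.Gp) * ⟨q, d⟩ = ⟨T1 p + q, c + d + P.th (D (T1 p) q)⟩ := mul_j1 _ _ h

/-- The elements `(0, c)`, i.e. powers of `x`. -/
def cen : Multiplicative (ZMod P.n) →* P.Gp where
  toFun c := ⟨0, c.toAdd⟩
  map_one' := rfl
  map_mul' c d := by
    rw [mul_def]; simp [D_zero_left]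

lemma cen_apply (c : ZMod P.n) : cen (Multiplicative.ofAdd c) = (⟨0, c⟩ : P.Gp) := rfl

lemma cen_zpow (c : ZMod P.n) (z : ℤ) : (⟨0, c⟩ : P.Gp) ^ z = ⟨0, z * c⟩ := by
  rw [← cen_apply, ← map_zpow, ← ofAdd_zsmul, cen_apply, zsmul_eq_mul]

lemma cen_pow (c : ZMod P.n) (z : ℕ) : (⟨0, c⟩ : P.Gp) ^ z = ⟨0, z * c⟩ := by
  rw [← cen_apply, ← map_pow, ← ofAdd_nsmul, cen_apply, nsmul_eq_mul]

lemma cen_mul (c : ZMod P.n) (g : P.Gp) : (⟨0, c⟩ : P.Gp) * g = ⟨g.p, c + g.c⟩ := by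
  rw [mul_def]; simp [D_zero_left]

open scoped commutatorElement in
lemma mem_comm_of {G : Type*} [Group G] {H K : Subgroup G} {a b k : G} (ha : a ∈ H) (hb : b ∈ K)
    (h : a * b = b * a * k) : k ∈ ⁅H, K⁆ := by
  have : k = ⁅a⁻¹, b⁻¹⁆ := by
    rw [commutatorElement_def, inv_inv, inv_inv]
    have : k = (b * a)⁻¹ * (a * b) := by rw [h]; group
    rw [this]; group
  rw [this]
  exact Subgroup.commutator_mem_commutator (H.inv_mem ha) (K.inv_mem hb)

lemma D_swap (p q : A) : D q p = - D p q := by simp [D]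

lemma rc_zW (z : ZMod P.n) : P.rc (z * P.W) = 0 := by rw [map_mul, rc_W, mul_zero]

lemma th_zW (k : ZMod 27) : ∃ z : ℤ, P.th k = z * P.W := by
  obtain ⟨z, rfl⟩ := ZMod.intCast_surjective k
  exact ⟨z, th_int P z⟩

lemma th_one : P.th 1 = P.W := by simpa using th_int P 1

/-- The commutator of two elements with `j = 0`. -/
lemma comm_j0 (g h : P.Gp) (hg : g.j = 0) (hh : h.j = 0) :
    g * h = h * g * ⟨0, P.th (2 * D g.p h.p)⟩ := by
  have e1 : P.th (2 * D g.p h.p) = P.th (D g.p h.p) + P.th (D g.p h.p) := by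
    rw [two_mul, map_add]
  rw [mul_j0 g h hh, mul_j0 h g hg, mk_mul_j0 _ _ _ _ (by simp [rc_th]), e1, D_swap g.p h.p,
    D_zero_right]
  ext1
  · simp only [add_zero]; abel
  · simp only [map_neg, map_zero]; abel

section ab
variable (N : ℕ) (hN : N ∣ P.n) (hWN : ZMod.castHom hN (ZMod N) P.W = 0)

include hWN in
lemma cast_th (k : ZMod 27) : ZMod.castHom hN (ZMod N) (P.th k) = 0 := by
  obtain ⟨z, hz⟩ := th_zW (P := P) k
  rw [hz, map_mul, hWN, mul_zero]

/-- The abelianization map. -/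
def psi : P.Gp →* Multiplicative (ZMod N × ZMod 3) where
  toFun g := Multiplicative.ofAdd (ZMod.castHom hN (ZMod N) g.c, r3 g.p.1)
  map_one' := by rw [one_def]; simp
  map_mul' g h := by
    rw [mul_def, ← ofAdd_add]
    congr 1
    ext
    · simp only [map_add, cast_th N hN hWN, add_zero, Prod.fst_add]
    · simp only [map_add, Prod.fst_add, Prod.snd_add, r3_T]

lemma mem_ker_psi (g : P.Gp) :
    g ∈ (psi N hN hWN).ker ↔ ZMod.castHom hN (ZMod N) g.c = 0 ∧ r3 g.p.1 = 0 := by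
  rw [MonoidHom.mem_ker]
  show (ZMod.castHom hN (ZMod N) g.c, r3 g.p.1) = (0, 0) ↔ _
  rw [Prod.mk.injEq]

lemma psi_surj : Function.Surjective (psi N hN hWN) := by
  intro t
  obtain ⟨c, hc⟩ := ZMod.castHom_surjective hN t.toAdd.1
  obtain ⟨a, ha⟩ := ZMod.castHom_surjective (show 3 ∣ 81 by norm_num) t.toAdd.2
  refine ⟨⟨(a, 0), c⟩, ?_⟩
  show Multiplicative.ofAdd (ZMod.castHom hN (ZMod N) c, r3 a) = t
  rw [hc]; 
  exact congrArg (fun q => Multiplicative.ofAdd (t.toAdd.1, q)) ha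

lemma W_mem (z : ℤ) : (⟨0, z * P.W⟩ : P.Gp) ∈ commutator P.Gp := by
  have h1 : (⟨0, 2 * P.W⟩ : P.Gp) ∈ commutator P.Gp := by
    have h := comm_j0 (P := P) ⟨(1, 0), -1⟩ ⟨(0, 1), 0⟩ (by simp [j]) (by simp [j])
    have hD : P.th (2 * D ((1, 0) : A) (0, 1)) = 2 * P.W := by
      rw [show 2 * D ((1, 0) : A) (0, 1) = ((2 : ℤ) : ZMod 27) by decide, th_int]; simp
    simp only [hD] at h
    exact mem_comm_of (Subgroup.mem_top _) (Subgroup.mem_top _) h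
  have h2 := (commutator P.Gp).zpow_mem h1 (14 * z)
  rw [cen_zpow] at h2
  convert h2 using 2
  push_cast
  linear_combination (-(z : ZMod P.n)) * P.hW

lemma shift_mem (p : A) (c : ZMod P.n) (z : ℤ) (h : (⟨p, c⟩ : P.Gp) ∈ commutator P.Gp) :
    (⟨p, c + z * P.W⟩ : P.Gp) ∈ commutator P.Gp := by
  have := (commutator P.Gp).mul_mem (W_mem z) h
  rw [cen_mul] at this
  rw [add_comm c]; exact this

lemma s2_mem : (⟨(0, 1), 0⟩ : P.Gp) ∈ commutator P.Gp := by
  have h : (⟨(1, 0), -1⟩ : P.Gp) * ⟨0, 1⟩ = ⟨0, 1⟩ * ⟨(1, 0), -1⟩ * ⟨(0, 1), -P.W⟩ := by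
    rw [cen_mul, mk_mul_j1 _ _ _ _ (by simp), mk_mul_j0 _ _ _ _ (by simp [rc_W])]
    ext1
    · show (T1 (1, 0) + 0 : A) = (1, 0) + (0, 1)
      decide
    · rw [D_zero_right, show D ((1, 0) : A) (0, 1) = 1 by decide, th_one]; simp
  have := mem_comm_of (Subgroup.mem_top _) (Subgroup.mem_top _) h
  have := shift_mem _ _ 1 this
  simpa using this

lemma s3_mem : (⟨(-30, -3), 0⟩ : P.Gp) ∈ commutator P.Gp := by
  have h : (⟨(0, 1), 0⟩ : P.Gp) * ⟨0, 1⟩ = ⟨0, 1⟩ * ⟨(0, 1), 0⟩ * ⟨(-30, -3), -P.th 30⟩ := by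
    rw [cen_mul, mk_mul_j1 _ _ _ _ (by simp),
      mk_mul_j0 _ _ _ _ (by simp only [map_neg, rc_th]; decide)]
    ext1
    · show (T1 (0, 1) + 0 : A) = (0, 1) + (-30, -3)
      decide
    · rw [D_zero_right, show D ((0, 1) : A) (-30, -3) = 30 by decide]; simp
  have := mem_comm_of (Subgroup.mem_top _) (Subgroup.mem_top _) h
  obtain ⟨z, hz⟩ := th_zW (P := P) 30
  have := shift_mem _ _ z this
  rw [← hz] at this
  simpa using this

/-- The `A`-components of the commutator subgroup. -/
def S : AddSubgroup A where
  carrier := {p | r3 p.1 = 0 ∧ (⟨p, 0⟩ : P.Gp) ∈ commutator P.Gp}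
  zero_mem' := ⟨by simp, (commutator P.Gp).one_mem⟩
  add_mem' := by
    rintro p q ⟨hp, hp'⟩ ⟨hq, hq'⟩
    refine ⟨by simp [hp, hq], ?_⟩
    have := (commutator P.Gp).mul_mem hp' hq'
    rw [mk_mul_j0 _ _ _ _ (by simp [hq])] at this
    obtain ⟨z, hz⟩ := th_zW (P := P) (D p q)
    have := shift_mem _ _ (-z) this
    simpa [hz] using this
  neg_mem' := by
    rintro p ⟨hp, hp'⟩
    refine ⟨by simp [hp], ?_⟩
    have := (commutator P.Gp).inv_mem hp'
    have hj : j (⟨p, 0⟩ : P.Gp) = 0 := by simp [j, hp]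
    rw [inv_def, hj] at this
    simpa [T_zero] using this

lemma A_mem (p : A) (hp : r3 p.1 = 0) : (⟨p, 0⟩ : P.Gp) ∈ commutator P.Gp := by
  have h2 : ((0, 1) : A) ∈ S (P := P) := ⟨by simp, s2_mem⟩
  have h3 : ((-30, -3) : A) ∈ S (P := P) := ⟨by decide, s3_mem⟩
  have h4 : ((-30, 0) : A) ∈ S (P := P) := by
    have := S.add_mem h3 (S.nsmul_mem h2 3)
    rwa [show ((-30, -3) : A) + 3 • (0, 1) = (-30, 0) by decide] at this
  have key : ∀ a : ZMod 81, r3 a = 0 → a = ((a.val / 3 * 8 : ℕ) : ZMod 81) * (-30) := by decide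
  have h5 : p = (p.1.val / 3 * 8) • ((-30, 0) : A) + p.2.val • ((0, 1) : A) := by
    ext
    · simpa using key p.1 hp
    · simp
  have : p ∈ S (P := P) := by
    rw [h5]; exact S.add_mem (S.nsmul_mem h4 _) (S.nsmul_mem h2 _)
  exact this.2

variable (hker : ∀ c : ZMod P.n, ZMod.castHom hN (ZMod N) c = 0 → ∃ z : ℤ, c = z * P.W)

include hker in
lemma ker_psi : (psi N hN hWN).ker = commutator P.Gp := by
  apply le_antisymm
  · rintro ⟨p, c⟩ hg
    rw [mem_ker_psi] at hg
    obtain ⟨z, hz⟩ := hker c hg.1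
    have := shift_mem (P := P) p 0 z (A_mem p hg.2)
    rw [zero_add] at this
    simp only [hz]; exact this
  · exact Abelianization.commutator_subset_ker _

include hN hWN hker in
lemma mem_commutator (g : P.Gp) :
    g ∈ commutator P.Gp ↔ (∃ z : ℤ, g.c = z * P.W) ∧ r3 g.p.1 = 0 := by
  rw [← ker_psi N hN hWN hker, mem_ker_psi]
  constructor
  · rintro ⟨h1, h2⟩; exact ⟨hker _ h1, h2⟩
  · rintro ⟨⟨z, hz⟩, h2⟩
    refine ⟨?_, h2⟩
    rw [hz, map_mul, hWN, mul_zero]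

include hWN hker in
lemma ab_equiv : Nonempty (Abelianization P.Gp ≃* Multiplicative (ZMod N × ZMod 3)) :=
  ⟨(QuotientGroup.quotientMulEquivOfEq (ker_psi N hN hWN hker).symm).trans
    (QuotientGroup.quotientKerEquivOfSurjective _ (psi_surj N hN hWN))⟩

/-- The σ-automorphism. -/
def sig : P.Gp ≃* P.Gp where
  toFun g := ⟨tau g.p, -g.c⟩
  invFun g := ⟨tau g.p, -g.c⟩
  left_inv g := by ext1 <;> simp [tau_tau]
  right_inv g := by ext1 <;> simp [tau_tau]
  map_mul' g h := by
    have hj : j (⟨tau h.p, -h.c⟩ : P.Gp) = - h.j := by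
      simp only [j, r3_tau, map_neg]; ring
    rw [mul_def g h, mul_def ⟨tau g.p, -g.c⟩, hj]
    simp only [map_add, tau_T]
    ext1
    · rfl
    · simp only
      rw [← tau_T, D_tau, map_neg]; abel

include hWN hker in
lemma isSigma : IsSigmaGroup P.Gp := by
  refine ⟨sig, fun g => ?_⟩
  rw [eq_inv_iff_mul_eq_one, ← map_mul, ← MonoidHom.mem_ker, Abelianization.ker_of,
    ← ker_psi N hN hWN hker, MonoidHom.mem_ker, map_mul]
  show Multiplicative.ofAdd (ZMod.castHom hN (ZMod N) (-g.c), r3 (tau g.p).1) *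
    Multiplicative.ofAdd (ZMod.castHom hN (ZMod N) g.c, r3 g.p.1) = 1
  rw [← ofAdd_add, r3_tau, map_neg, Prod.mk_add_mk, neg_add_cancel, neg_add_cancel]
  rfl

open scoped commutatorElement in
include hN hWN hker in
lemma mem_d2 (g : P.Gp) :
    g ∈ derivedSeries P.Gp 2 ↔ g.p = 0 ∧ ∃ z : ℤ, g.c = z * (3 * P.W) := by
  have hd : derivedSeries P.Gp 2 = ⁅commutator P.Gp, commutator P.Gp⁆ := by
    rw [derivedSeries_succ, derivedSeries_one]
  rw [hd]
  constructor
  · let K : Subgroup P.Gp := (AddSubgroup.zmultiples (3 * P.W)).toSubgroup.map cen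
    have hK : ∀ g, g ∈ K ↔ g.p = 0 ∧ ∃ z : ℤ, g.c = z * (3 * P.W) := by
      intro g
      constructor
      · rintro ⟨c, ⟨z, hz⟩, rfl⟩
        refine ⟨rfl, z, ?_⟩
        rw [← zsmul_eq_mul]; exact hz.symm
      · rintro ⟨h1, z, hz⟩
        refine ⟨Multiplicative.ofAdd g.c, ⟨z, ?_⟩, ?_⟩
        · show z • (3 * P.W) = g.c
          rw [hz, zsmul_eq_mul]
        · rw [cen_apply, ← h1]
    rw [← hK]
    revert g
    show ⁅commutator P.Gp, commutator P.Gp⁆ ≤ K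
    rw [Subgroup.commutator_le]
    intro g hg h hh
    have hmem : ∀ g h : P.Gp, g ∈ commutator P.Gp → h ∈ commutator P.Gp →
        g⁻¹ * h⁻¹ * g * h ∈ K := by
      intro g h hg hh
      rw [mem_commutator N hN hWN hker] at hg hh
      obtain ⟨⟨z, hz⟩, hgp⟩ := hg
      obtain ⟨⟨z', hz'⟩, hhp⟩ := hh
      have e := comm_j0 g h (by simp [j, hgp, hz, rc_W]) (by simp [j, hhp, hz', rc_W])
      have e2 : g⁻¹ * h⁻¹ * g * h = ⟨0, P.th (2 * D g.p h.p)⟩ := by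
        have : g⁻¹ * h⁻¹ * g * h = (h * g)⁻¹ * (g * h) := by group
        rw [this, e]; group
      rw [e2, hK]
      refine ⟨rfl, ?_⟩
      have key : ∀ a : ZMod 81, r3 a = 0 → red a = 3 * ((a.val / 3 : ℕ) : ZMod 27) := by decide
      obtain ⟨d, hd⟩ : ∃ d : ZMod 27, 2 * D g.p h.p = 3 * d := by
        refine ⟨2 * (((g.p.1.val / 3 : ℕ) : ZMod 27) * h.p.2
          - ((h.p.1.val / 3 : ℕ) : ZMod 27) * g.p.2), ?_⟩
        rw [D, key _ hgp, key _ hhp]; ring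
      obtain ⟨d, rfl⟩ := ZMod.intCast_surjective d
      refine ⟨d, ?_⟩
      rw [hd, show (3 * (d : ZMod 27)) = ((3 * d : ℤ) : ZMod 27) by push_cast; rfl, th_int]
      push_cast; ring
    have := hmem g⁻¹ h⁻¹ ((commutator P.Gp).inv_mem hg) ((commutator P.Gp).inv_mem hh)
    rw [inv_inv, inv_inv] at this
    exact this
  · rintro ⟨h1, z, hz⟩
    have h := comm_j0 (P := P) ⟨(3, 0), 0⟩ ⟨(0, 1), 0⟩
      (by simp only [j, map_zero, add_zero]; decide) (by simp [j])
    have hD : P.th (2 * D ((3, 0) : A) (0, 1)) = 6 * P.W := by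
      rw [show 2 * D ((3, 0) : A) (0, 1) = ((6 : ℤ) : ZMod 27) by decide, th_int]; simp
    simp only [hD] at h
    have h := mem_comm_of (A_mem (3, 0) (by decide)) (A_mem (0, 1) (by decide)) h
    have h2 := Subgroup.zpow_mem _ h (14 * z)
    rw [cen_zpow] at h2
    convert h2 using 1
    ext1
    · exact h1
    · rw [hz]; push_cast
      linear_combination (-3 * (z : ZMod P.n)) * P.hW

open scoped commutatorElement in
include hN hWN hker in
lemma d3 : derivedSeries P.Gp 3 = ⊥ := by
  rw [derivedSeries_succ, eq_bot_iff, Subgroup.commutator_le]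
  intro g hg h hh
  rw [mem_d2 N hN hWN hker] at hg hh
  rw [Subgroup.mem_bot, commutatorElement_eq_one_iff_mul_comm]
  obtain ⟨p, c⟩ := g
  obtain ⟨q, d⟩ := h
  obtain ⟨rfl, -⟩ := hg
  obtain ⟨rfl, -⟩ := hh
  rw [cen_mul, cen_mul, add_comm c]

end ab

/-- The underlying set is a product. -/
def eqv : P.Gp ≃ (ZMod 81 × ZMod 27) × ZMod P.n where
  toFun g := (g.p, g.c)
  invFun t := ⟨t.1, t.2⟩
  left_inv _ := rfl
  right_inv _ := rfl

lemma card : Nat.card P.Gp = 81 * 27 * P.n := by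
  rw [Nat.card_congr eqv, Nat.card_prod, Nat.card_prod, Nat.card_zmod, Nat.card_zmod,
    Nat.card_zmod]

/-- Reduction homomorphism between members of the family. -/
def phi {Q : Par} (h : Q.n ∣ P.n) (hW : ZMod.castHom h (ZMod Q.n) P.W = Q.W) : P.Gp →* Q.Gp where
  toFun g := ⟨g.p, ZMod.castHom h (ZMod Q.n) g.c⟩
  map_one' := by rw [one_def, one_def, map_zero]
  map_mul' f g := by
    have hj : j (⟨g.p, ZMod.castHom h (ZMod Q.n) g.c⟩ : Q.Gp) = g.j := by
      have : Q.rc.comp (ZMod.castHom h (ZMod Q.n)) = P.rc := Subsingleton.elim _ _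
      simp only [j, ← this]; rfl
    rw [mul_def f g, mul_def ⟨f.p, _⟩, hj]
    ext1
    · rfl
    · simp only [map_add]
      congr 1
      obtain ⟨z, hz⟩ := ZMod.intCast_surjective (D (T g.j f.p) g.p)
      rw [← hz, th_int, th_int, map_mul, hW, map_intCast]

/-- `x, y` generate. -/
lemma gen (m : ZMod P.n) (hm : P.rc m = 0) :
    Subgroup.closure {(⟨0, 1⟩ : P.Gp), ⟨(1, 0), m⟩} = ⊤ := by
  set H := Subgroup.closure {(⟨0, 1⟩ : P.Gp), ⟨(1, 0), m⟩} with hH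
  have hx : (⟨0, 1⟩ : P.Gp) ∈ H := Subgroup.subset_closure (by simp)
  have hy : (⟨(1, 0), m⟩ : P.Gp) ∈ H := Subgroup.subset_closure (by simp)
  have hc : ∀ c, (⟨0, c⟩ : P.Gp) ∈ H := by
    intro c
    obtain ⟨z, rfl⟩ := ZMod.intCast_surjective c
    have := H.zpow_mem hx z
    rw [cen_zpow, mul_one] at this
    exact this
  have hs : ∀ p c d, (⟨p, c⟩ : P.Gp) ∈ H → (⟨p, d⟩ : P.Gp) ∈ H := by
    intro p c d h
    have := H.mul_mem (hc (d - c)) h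
    rw [cen_mul] at this
    simpa using this
  let S : AddSubmonoid A :=
    { carrier := {p | (⟨p, 0⟩ : P.Gp) ∈ H}
      zero_mem' := H.one_mem
      add_mem' := by
        intro p q hp hq
        obtain ⟨c, hcc⟩ := ZMod.castHom_surjective P.h3 (- r3 q.1)
        have := H.mul_mem hp (hs q 0 c hq)
        rw [mk_mul_j0 _ _ _ _ (by rw [show P.rc c = _ from hcc]; simp)] at this
        exact hs _ _ _ this }
  have h1 : ((1, 0) : A) ∈ S := hs _ _ _ hy
  have h2 : ((1, 1) : A) ∈ S := by
    have := H.mul_mem hy hx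
    rw [mk_mul_j1 _ _ _ _ (by simp)] at this
    exact hs _ _ 0 this
  rw [eq_top_iff]
  rintro ⟨p, c⟩ -
  refine hs p 0 c ?_
  have h3 : ((0, 1) : A) ∈ S := by
    have := S.add_mem h2 (S.nsmul_mem h1 80)
    rwa [show ((1, 1) : A) + 80 • (1, 0) = (0, 1) by
      rw [Prod.smul_mk, nsmul_eq_mul, nsmul_eq_mul]; decide] at this
  have h5 : p = p.1.val • ((1, 0) : A) + p.2.val • ((0, 1) : A) := by
    ext <;> simp
  show p ∈ S
  rw [h5]; exact S.add_mem (S.nsmul_mem h1 _) (S.nsmul_mem h3 _)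

lemma comm'_eq {G : Type*} [Group G] {a b k : G} (h : a * b = b * a * k) : comm' a b = k := by
  have : comm' a b = (b * a)⁻¹ * (a * b) := by simp only [comm']; group
  rw [this, h]; group

section rel
variable (h3W : 3 * P.W = 0)
include h3W

lemma th3 (d : ZMod 27) : P.th (3 * d) = 0 := by
  obtain ⟨d, rfl⟩ := ZMod.intCast_surjective d
  rw [show (3 * (d : ZMod 27)) = ((3 * d : ℤ) : ZMod 27) by push_cast; rfl, th_int]
  push_cast
  linear_combination (d : ZMod P.n) * h3W

lemma stepx (p q : A) (c : ZMod P.n) (d : ZMod 27) 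
    (hq : T1 p = p + q) (hq' : r3 q.1 = 0) (hD : D p q = 3 * d) :
    comm' (⟨p, c⟩ : P.Gp) ⟨0, 1⟩ = ⟨q, 0⟩ := by
  apply comm'_eq
  rw [cen_mul, mk_mul_j1 _ _ _ _ (by simp), mk_mul_j0 _ _ _ _ (by simp [hq']), hD, th3 h3W,
    D_zero_right, hq]
  ext1 <;> simp [add_comm]

lemma stepy (p q : A) (c c' m : ZMod P.n) (k d : ZMod 27) (hp : r3 p.1 = 0) (hc : P.rc c = 0)
    (hc' : c' = P.th k) (hm : P.rc m = 0)
    (hq : T1 p = p + q) (hq' : r3 q.1 = 0)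
    (hD : D (T1 p) (1, 0) = D (1, 0) p + k + D ((1, 0) + p) q + 3 * d) :
    comm' (⟨p, c⟩ : P.Gp) ⟨(1, 0), m⟩ = ⟨q, c'⟩ := by
  apply comm'_eq
  rw [mk_mul_j1 _ _ _ _ (by rw [hm, map_one, add_zero]), mk_mul_j0 _ _ _ _ (by rw [hq', hc', rc_th, add_zero]),
    mk_mul_j0 _ _ _ _ (by rw [hp, hc, add_zero]), hD, hq]
  simp only [map_add, th3 h3W, hc']
  ext1
  · show p + q + (1, 0) = (1, 0) + p + q
    abel
  · show _ = _
    ring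

lemma sg2 (m : ZMod P.n) (hm : P.rc m = 0) :
    sgen (⟨0, 1⟩ : P.Gp) ⟨(1, 0), m⟩ 2 = ⟨(0, 1), -P.W⟩ := by
  apply comm'_eq
  rw [cen_mul, mk_mul_j1 _ _ _ _ (by simp), mk_mul_j0 _ _ _ _ (by simp [rc_W]), D_zero_right,
    show D ((1, 0) : A) (0, 1) = 1 by decide, th_one]
  ext1
  · show (T1 (1, 0) + 0 : A) = (1, 0) + (0, 1)
    decide
  · simp [add_comm]

lemma sg3 (m : ZMod P.n) (hm : P.rc m = 0) :
    sgen (⟨0, 1⟩ : P.Gp) ⟨(1, 0), m⟩ 3 = ⟨(-30, -3), 0⟩ := by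
  show comm' (sgen _ _ 2) _ = _
  rw [sg2 h3W m hm]
  exact stepx h3W _ _ _ 10 (by decide) (by decide) (by decide)

lemma sg4 (m : ZMod P.n) (hm : P.rc m = 0) :
    sgen (⟨0, 1⟩ : P.Gp) ⟨(1, 0), m⟩ 4 = ⟨(9, 6), 0⟩ := by
  show comm' (sgen _ _ 3) _ = _
  rw [sg3 h3W m hm]
  exact stepx h3W _ _ _ (-60 + 9) (by decide) (by decide) (by decide)

lemma sg5 (m : ZMod P.n) (hm : P.rc m = 0) :
    sgen (⟨0, 1⟩ : P.Gp) ⟨(1, 0), m⟩ 5 = ⟨(63, 18), 0⟩ := by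
  show comm' (sgen _ _ 4) _ = _
  rw [sg4 h3W m hm]
  exact stepx h3W _ _ _ 0 (by decide) (by decide) (by decide)

lemma sg6 (m : ZMod P.n) (hm : P.rc m = 0) :
    sgen (⟨0, 1⟩ : P.Gp) ⟨(1, 0), m⟩ 6 = ⟨(27, 9), 0⟩ := by
  show comm' (sgen _ _ 5) _ = _
  rw [sg5 h3W m hm]
  exact stepx h3W _ _ _ 0 (by decide) (by decide) (by decide)

lemma sg7 (m : ZMod P.n) (hm : P.rc m = 0) :
    sgen (⟨0, 1⟩ : P.Gp) ⟨(1, 0), m⟩ 7 = ⟨(54, 0), 0⟩ := by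
  show comm' (sgen _ _ 6) _ = _
  rw [sg6 h3W m hm]
  exact stepx h3W _ _ _ 0 (by decide) (by decide) (by decide)

/-- Cube of an element with `j = 0`. -/
lemma cube_j0 (p : A) (c : ZMod P.n) (h : r3 p.1 + P.rc c = 0) :
    (⟨p, c⟩ : P.Gp) ^ 3 = ⟨p + p + p, c + c + c⟩ := by
  rw [pow_succ, pow_two, mk_mul_j0 _ _ _ _ h, mk_mul_j0 _ _ _ _ h, D_add_left, D_self]
  simp

lemma sq_mul_j0 (p q : A) (hp : r3 p.1 = 0) (hq : r3 q.1 = 0) (hD : ∃ d, D p q = 3 * d) :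
    (⟨p, 0⟩ : P.Gp) ^ 2 * ⟨q, 0⟩ = ⟨p + p + q, 0⟩ := by
  obtain ⟨d, hd⟩ := hD
  rw [pow_two, mk_mul_j0 _ _ _ _ (by rw [hq, map_zero, add_zero]),
    mk_mul_j0 _ _ _ _ (by rw [hp, map_zero, add_zero]), D_add_left,
    D_self, hd, map_add, th3 h3W]
  simp

lemma y_cube (m : ZMod P.n) (hm : P.rc m = 0) (hm3 : 3 * m = P.W) :
    (⟨(1, 0), m⟩ : P.Gp) ^ 3 = ⟨(54, 0), 0⟩ := by
  have h : r3 ((1, 0) : A).1 + P.rc m = 1 := by simp [hm]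
  rw [pow_succ, pow_two, mk_mul_j1 _ _ _ _ h, mk_mul_j1 _ _ _ _ h,
    show D (T1 (1, 0)) (1, 0) = ((-1 : ℤ) : ZMod 27) by decide,
    show D (T1 (T1 (1, 0) + (1, 0))) (1, 0) = 0 by decide, th_int]
  ext1
  · show (T1 (T1 (1, 0) + (1, 0)) + (1, 0) : A) = (54, 0)
    decide
  · simp only [map_zero]; push_cast
    linear_combination hm3

end rel

end Gp
end Par
/-- The concrete parameters. -/
def mkPar (f r κ : ℕ) (hr : r ≤ 3) : Par where
  n := 3 ^ (f + 1 + r)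
  W := ((κ * 3 ^ (f + 1) : ℕ) : ZMod (3 ^ (f + 1 + r)))
  h3 := Dvd.intro_left (3 ^ (f + r)) (by rw [← pow_succ]; congr 1; omega)
  hW := by
    rw [show (27 : ZMod (3 ^ (f + 1 + r))) = ((27 : ℕ) : ZMod (3 ^ (f + 1 + r))) by simp,
      ← Nat.cast_mul, ZMod.natCast_eq_zero_iff]
    have : 3 ^ (f + 1 + r) ∣ 3 ^ (f + 1 + 3) := pow_dvd_pow 3 (by omega)
    exact this.trans ⟨κ, by ring⟩
  hj := by
    rw [map_natCast, ZMod.natCast_eq_zero_iff]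
    exact ⟨κ * 3 ^ f, by ring⟩

lemma mk_dvd (f r : ℕ) : 3 ^ (f + 1) ∣ 3 ^ (f + 1 + r) := pow_dvd_pow 3 (by omega)

lemma mk_hWN (f r κ : ℕ) (hr : r ≤ 3) :
    ZMod.castHom (mk_dvd f r) (ZMod (3 ^ (f + 1))) (mkPar f r κ hr).W = 0 := by
  show ZMod.castHom (mk_dvd f r) (ZMod (3 ^ (f + 1))) ((κ * 3 ^ (f + 1) : ℕ) : ZMod _) = 0
  rw [map_natCast, ZMod.natCast_eq_zero_iff]
  exact ⟨κ, by ring⟩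

lemma mk_hker (f r κ : ℕ) (hr : r ≤ 3) (κ' q : ℕ) (hκ : κ * κ' = 1 + 27 * q)
    (c : ZMod (mkPar f r κ hr).n)
    (hc : ZMod.castHom (mk_dvd f r) (ZMod (3 ^ (f + 1))) c = 0) :
    ∃ z : ℤ, c = z * (mkPar f r κ hr).W := by
  change ZMod (3 ^ (f + 1 + r)) at c
  obtain ⟨z, rfl⟩ := ZMod.intCast_surjective c
  rw [map_intCast, ZMod.intCast_zmod_eq_zero_iff_dvd] at hc
  obtain ⟨t, rfl⟩ := hc
  refine ⟨t * κ', ?_⟩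
  have h27' : (27 : ZMod (3 ^ (f + 1 + r))) * 3 ^ (f + 1) = 0 := by
    rw [show (27 : ZMod (3 ^ (f + 1 + r))) * 3 ^ (f + 1) = ((27 * 3 ^ (f + 1) : ℕ) : ZMod _) by
      push_cast; rfl, ZMod.natCast_eq_zero_iff]
    have : 3 ^ (f + 1 + r) ∣ 3 ^ (f + 1 + 3) := pow_dvd_pow 3 (by omega)
    exact this.trans ⟨1, by ring⟩
  have hκ' : (κ : ZMod (3 ^ (f + 1 + r))) * κ' = 1 + 27 * q := by exact_mod_cast congrArg Nat.cast hκ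
  show (((3 ^ (f + 1) : ℕ) * t : ℤ) : ZMod (3 ^ (f + 1 + r))) = ((t * κ' : ℤ) : ZMod (3 ^ (f + 1 + r))) * ((κ * 3 ^ (f + 1) : ℕ) : ZMod _)
  push_cast
  linear_combination (-(t : ZMod (3 ^ (f + 1 + r))) * q) * h27' - (t * 3 ^ (f + 1)) * hκ'

instance (f r κ : ℕ) (hr : r ≤ 3) : Finite (mkPar f r κ hr).Gp := by
  have : NeZero (mkPar f r κ hr).n := ⟨(pow_pos (by norm_num) _ : 0 < 3 ^ (f + 1 + r)).ne'⟩
  exact Finite.of_equiv _ Par.Gp.eqv.symm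

theorem stmt12 (e i : ℕ) (he : 7 ≤ e) (hi : i = 2 ∨ i = 3) :
    ∃ (M : Type) (_ : Group M) (_ : Finite M) (x y : M),
      Subgroup.closure {x, y} = ⊤ ∧
      Nat.card M = 3 ^ (8 + e) ∧
      IsMetabelian M ∧
      IsSigmaGroup M ∧
      (x ^ 3 ^ e) ^ 3 = 1 ∧
      y ^ 3 = sgen x y 7 ∧
      sgen x y 2 ^ 3 = sgen x y 4 ^ 2 * sgen x y 5 ∧
      sgen x y 3 ^ 3 = sgen x y 5 ^ 2 * sgen x y 6 ∧
      sgen x y 4 ^ 3 = sgen x y 6 ^ 2 * sgen x y 7 ∧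
      sgen x y 5 ^ 3 = sgen x y 7 ^ 2 ∧
      tgenD x y 3 = sgen x y 3 * (x ^ 3 ^ e) ^ (i - 1) ∧
      tgenD x y 4 = sgen x y 4 ∧
      tgenD x y 5 = sgen x y 5 ∧
      tgenD x y 6 = sgen x y 6 ∧
      tgenD x y 7 = sgen x y 7 ∧
      Nonempty (Abelianization M ≃* Multiplicative (ZMod (3 ^ e) × ZMod 3)) ∧
      ∃ (G : Type) (_ : Group G) (_ : Finite G),
        Nat.card G = 3 ^ (10 + e) ∧
        Nonempty (Abelianization G ≃* Multiplicative (ZMod (3 ^ e) × ZMod 3)) ∧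
        IsSigmaGroup G ∧
        derivedSeries G 2 ≠ ⊥ ∧
        derivedSeries G 3 = ⊥ ∧
        ∃ φ : G →* M, Function.Surjective φ ∧ φ.ker = derivedSeries G 2 := by
  obtain ⟨f, rfl⟩ : ∃ f, e = f + 1 := ⟨e - 1, by omega⟩
  obtain ⟨κ, κ', q, hi1, hκ, hk3⟩ : ∃ κ κ' q : ℕ, i - 1 = κ ∧ κ * κ' = 1 + 27 * q ∧ ¬ 3 ∣ κ := by
    rcases hi with rfl | rfl
    · exact ⟨1, 1, 0, rfl, rfl, by norm_num⟩
    · exact ⟨2, 14, 1, rfl, rfl, by norm_num⟩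
  have hr1 : 1 ≤ 3 := by norm_num
  have hr3 : 3 ≤ 3 := le_rfl
  let P := mkPar f 1 κ hr1
  let Q := mkPar f 3 κ hr3
  have hP := mk_hker f 1 κ hr1 κ' q hκ
  have hQ := mk_hker f 3 κ hr3 κ' q hκ
  let m : ZMod P.n := ((κ * 3 ^ f : ℕ) : ZMod (3 ^ (f + 1 + 1)))
  have hm : P.rc m = 0 := by
    show ZMod.castHom _ (ZMod 3) ((κ * 3 ^ f : ℕ) : ZMod (3 ^ (f + 1 + 1))) = 0
    rw [map_natCast, ZMod.natCast_eq_zero_iff]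
    exact Dvd.dvd.mul_left (dvd_pow_self 3 (by omega)) κ
  have hm3 : 3 * m = P.W := by
    show 3 * ((κ * 3 ^ f : ℕ) : ZMod (3 ^ (f + 1 + 1))) = ((κ * 3 ^ (f + 1) : ℕ) : ZMod _)
    push_cast; ring
  have h3W : 3 * P.W = 0 := by
    show 3 * ((κ * 3 ^ (f + 1) : ℕ) : ZMod (3 ^ (f + 1 + 1))) = 0
    rw [show (3 : ZMod (3 ^ (f + 1 + 1))) = ((3 : ℕ) : ZMod (3 ^ (f + 1 + 1))) by simp,
      ← Nat.cast_mul, ZMod.natCast_eq_zero_iff]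
    exact ⟨κ, by ring⟩
  have hxe : (κ : ZMod P.n) * ((3 ^ (f + 1) : ℕ) * 1) = P.W := by
    rw [mul_one, ← Nat.cast_mul]; rfl
  have h3e : ((3 : ℕ) : ZMod P.n) * ((3 ^ (f + 1) : ℕ) * 1) = 0 := by
    rw [mul_one, ← Nat.cast_mul]
    refine (ZMod.natCast_eq_zero_iff _ (3 ^ (f + 1 + 1))).2 ⟨1, by ring⟩
  have s2 := Par.Gp.sg2 h3W m hm
  have s3 := Par.Gp.sg3 h3W m hm
  have s4 := Par.Gp.sg4 h3W m hm
  have s5 := Par.Gp.sg5 h3W m hm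
  have s6 := Par.Gp.sg6 h3W m hm
  have s7 := Par.Gp.sg7 h3W m hm
  have hrW : P.rc (-P.W) = 0 := by rw [map_neg, Par.rc_W, neg_zero]
  have hr0 : P.rc 0 = 0 := map_zero _
  have hth0 : (0 : ZMod P.n) = P.th 0 := (map_zero _).symm
  have hQP : P.n ∣ Q.n := pow_dvd_pow 3 (by omega : f + 1 + 1 ≤ f + 1 + 3)
  have hQPW : ZMod.castHom hQP (ZMod P.n) Q.W = P.W := by
    exact map_natCast (ZMod.castHom hQP (ZMod P.n)) (κ * 3 ^ (f + 1))
  refine ⟨P.Gp, inferInstance, inferInstance, ⟨0, 1⟩, ⟨(1, 0), m⟩, Par.Gp.gen m hm, ?_, ?_,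
    Par.Gp.isSigma _ _ (mk_hWN f 1 κ hr1) hP, ?_, ?_, ?_, ?_, ?_, ?_, ?_, ?_, ?_, ?_, ?_,
    Par.Gp.ab_equiv _ _ (mk_hWN f 1 κ hr1) hP,
    Q.Gp, inferInstance, inferInstance, ?_, Par.Gp.ab_equiv _ _ (mk_hWN f 3 κ hr3) hQ,
    Par.Gp.isSigma _ _ (mk_hWN f 3 κ hr3) hQ, ?_, Par.Gp.d3 _ _ (mk_hWN f 3 κ hr3) hQ,
    Par.Gp.phi hQP hQPW, ?_, ?_⟩
  · rw [Par.Gp.card]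
    show 81 * 27 * 3 ^ (f + 1 + 1) = _
    ring
  · rw [IsMetabelian, eq_bot_iff]
    intro g hg
    obtain ⟨h1, z, hz⟩ := (Par.Gp.mem_d2 _ _ (mk_hWN f 1 κ hr1) hP g).1 hg
    rw [h3W, mul_zero] at hz
    exact Par.Gp.ext h1 hz
  · rw [Par.Gp.cen_pow, Par.Gp.cen_pow, h3e]; rfl
  · rw [s7, Par.Gp.y_cube h3W m hm hm3]
  · rw [s2, s4, s5, Par.Gp.cube_j0 h3W _ _ (by rw [hrW]; decide),
      Par.Gp.sq_mul_j0 h3W _ _ (by decide) (by decide) ⟨0, by decide⟩]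
    refine Par.Gp.ext ?_ ?_
    · show ((0, 1) + (0, 1) + (0, 1) : Par.A) = (9, 6) + (9, 6) + (63, 18)
      decide
    · show -P.W + -P.W + -P.W = 0
      linear_combination - h3W
  · rw [s3, s5, s6, Par.Gp.cube_j0 h3W _ _ (by rw [hr0]; decide),
      Par.Gp.sq_mul_j0 h3W _ _ (by decide) (by decide) ⟨0, by decide⟩]
    refine Par.Gp.ext ?_ ?_
    · show ((-30, -3) + (-30, -3) + (-30, -3) : Par.A) = (63, 18) + (63, 18) + (27, 9)
      decide
    · show (0 : ZMod P.n) + 0 + 0 = 0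
      ring
  · rw [s4, s6, s7, Par.Gp.cube_j0 h3W _ _ (by rw [hr0]; decide),
      Par.Gp.sq_mul_j0 h3W _ _ (by decide) (by decide) ⟨0, by decide⟩]
    refine Par.Gp.ext ?_ ?_
    · show ((9, 6) + (9, 6) + (9, 6) : Par.A) = (27, 9) + (27, 9) + (54, 0)
      decide
    · show (0 : ZMod P.n) + 0 + 0 = 0
      ring
  · rw [s5, s7, Par.Gp.cube_j0 h3W _ _ (by rw [hr0]; decide), pow_two,
      Par.Gp.mk_mul_j0 _ _ _ _ (by rw [hr0]; decide), Par.D_self]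
    refine Par.Gp.ext ?_ ?_
    · show ((63, 18) + (63, 18) + (63, 18) : Par.A) = (54, 0) + (54, 0)
      decide
    · show (0 : ZMod P.n) + 0 + 0 = 0 + 0 + P.th 0
      rw [map_zero]
  · show comm' (sgen _ _ 2) _ = _
    rw [s2, s3, hi1, Par.Gp.cen_pow, Par.Gp.cen_pow, hxe,
      Par.Gp.mk_mul_j0 _ _ _ _ (by rw [Par.rc_W]; decide), Par.D_zero_right, map_zero, add_zero,
      add_zero, zero_add]
    exact Par.Gp.stepy h3W _ _ _ _ _ 1 0 (by decide) hrW Par.Gp.th_one.symm hm (by decide)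
      (by decide) (by decide)
  · show comm' (sgen _ _ 3) _ = _
    rw [s3, s4]
    exact Par.Gp.stepy h3W _ _ _ _ _ 0 4 (by decide) hr0 hth0 hm (by decide)
      (by decide) (by decide)
  · show comm' (sgen _ _ 4) _ = _
    rw [s4, s5]
    exact Par.Gp.stepy h3W _ _ _ _ _ 0 2 (by decide) hr0 hth0 hm (by decide)
      (by decide) (by decide)
  · show comm' (sgen _ _ 5) _ = _
    rw [s5, s6]
    exact Par.Gp.stepy h3W _ _ _ _ _ 0 0 (by decide) hr0 hth0 hm (by decide)
      (by decide) (by decide)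
  · show comm' (sgen _ _ 6) _ = _
    rw [s6, s7]
    exact Par.Gp.stepy h3W _ _ _ _ _ 0 3 (by decide) hr0 hth0 hm (by decide)
      (by decide) (by decide)
  · rw [Par.Gp.card]
    show 81 * 27 * 3 ^ (f + 1 + 3) = _
    ring
  · intro hbot
    have h1 := (Par.Gp.mem_d2 _ _ (mk_hWN f 3 κ hr3) hQ ⟨0, 3 * Q.W⟩).2 ⟨rfl, 1, by
      rw [Int.cast_one, one_mul]⟩
    rw [hbot, Subgroup.mem_bot] at h1
    have h2 : 3 * Q.W = 0 := congrArg Par.Gp.c h1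
    have h3 : ((3 * (κ * 3 ^ (f + 1)) : ℕ) : ZMod (3 ^ (f + 1 + 3))) = 0 := by
      rw [Nat.cast_mul]; exact h2
    rw [ZMod.natCast_eq_zero_iff] at h3
    have h4 : 3 ^ (f + 1 + 1) * 3 ∣ 3 ^ (f + 1 + 1) * κ := by
      refine Dvd.dvd.trans ⟨3, by ring⟩ (h3.trans ⟨1, by ring⟩)
    exact hk3 (Nat.dvd_of_mul_dvd_mul_left (by positivity) h4)
  · rintro ⟨p, c⟩
    obtain ⟨d, hd⟩ := ZMod.castHom_surjective hQP c
    exact ⟨⟨p, d⟩, Par.Gp.ext rfl hd⟩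
  · ext g
    rw [Par.Gp.mem_d2 _ _ (mk_hWN f 3 κ hr3) hQ, MonoidHom.mem_ker]
    constructor
    · intro h
      have hp : g.p = 0 := congrArg Par.Gp.p h
      have hc : ZMod.castHom hQP (ZMod P.n) g.c = 0 := congrArg Par.Gp.c h
      refine ⟨hp, ?_⟩
      have hc' : ZMod.castHom (mk_dvd f 3) (ZMod (3 ^ (f + 1))) g.c = 0 := by
        have : (ZMod.castHom (mk_dvd f 1) (ZMod (3 ^ (f + 1)))).comp
          (ZMod.castHom hQP (ZMod P.n)) = ZMod.castHom (mk_dvd f 3) (ZMod (3 ^ (f + 1))) :=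
          Subsingleton.elim _ _
        rw [← this]
        show ZMod.castHom (mk_dvd f 1) (ZMod (3 ^ (f + 1))) (ZMod.castHom hQP (ZMod P.n) g.c) = 0
        rw [hc]; exact map_zero (ZMod.castHom (mk_dvd f 1) (ZMod (3 ^ (f + 1))))
      obtain ⟨z, hz⟩ := hQ g.c hc'
      rw [hz, map_mul, map_intCast, hQPW] at hc
      have h5 : ((z * (κ * 3 ^ (f + 1)) : ℤ) : ZMod (3 ^ (f + 1 + 1))) = 0 := by
        have h9 : (z : ZMod (3 ^ (f + 1 + 1))) *
            ((κ * 3 ^ (f + 1) : ℕ) : ZMod (3 ^ (f + 1 + 1))) = 0 := hc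
        rw [← h9]; push_cast; rfl
      rw [ZMod.intCast_zmod_eq_zero_iff_dvd] at h5
      push_cast at h5
      have h6 : (3 : ℤ) ^ (f + 1) * 3 ∣ 3 ^ (f + 1) * (z * κ) := by
        refine Dvd.dvd.trans ⟨1, by ring⟩ (h5.trans ⟨1, by ring⟩)
      have h7 : (3 : ℤ) ∣ z * κ := Int.dvd_of_mul_dvd_mul_left (by positivity) h6
      have h8 : (3 : ℤ) ∣ z := by
        rcases (Int.prime_three.dvd_mul).1 h7 with h | h
        · exact h
        · exact absurd (by exact_mod_cast h) hk3
      obtain ⟨t, rfl⟩ := h8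
      refine ⟨t, ?_⟩
      rw [hz]; push_cast; ring
    · rintro ⟨hp, z, hz⟩
      refine Par.Gp.ext hp ?_
      show ZMod.castHom hQP (ZMod P.n) g.c = 0
      rw [hz, map_mul, map_mul, hQPW, map_ofNat, h3W, mul_zero]
end
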